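/- arXiv:1212.5832 — 2 statements merged into one kernel-verified Lean document; each statement's English description precedes it below -/
import Mathlib

section
/- Let Q be an affine quiver and k an algebraically closed field. Every indecomposable representation X of Q over k whose dimension vector has nonzero defect, ∂(dim X) = e(δ, dim X) ≠ 0 (i.e., X is preprojective or preinjective), is a brick: End(X) = k·id_X. -/
open scoped BigOperators

/-- A finite quiver: finite sets of vertices and arrows with source and target maps. -/
structure FinQuiver where
  V : Type
  A : Type
  [fintypeV : Fintype V]
  [fintypeA : Fintype A]
  [decEqV : DecidableEq V]
  src : A → V
  tgt : A → V

attribute [instance] FinQuiver.fintypeV FinQuiver.fintypeA FinQuiver.decEqV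

namespace FinQuiver

variable (Q : FinQuiver)

/-- The Euler form of a finite quiver. -/
def eulerForm (x y : Q.V → ℤ) : ℤ :=
  (∑ i : Q.V, x i * y i) - ∑ a : Q.A, x (Q.src a) * y (Q.tgt a)

/-- The Tits form of a finite quiver. -/
def titsForm (x : Q.V → ℤ) : ℤ := Q.eulerForm x x

/-- The quiver has no loops. -/
def NoLoops : Prop := ∀ a : Q.A, Q.src a ≠ Q.tgt a

/-- The underlying (simple) graph of a quiver without loops. -/
def graph : SimpleGraph Q.V where
  Adj i j := i ≠ j ∧ ∃ a : Q.A, (Q.src a = i ∧ Q.tgt a = j) ∨ (Q.src a = j ∧ Q.tgt a = i)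
  symm := by
    constructor
    rintro i j ⟨hij, a, h⟩
    exact ⟨hij.symm, a, h.symm⟩
  loopless := by
    constructor
    rintro i ⟨hii, -⟩
    exact hii rfl

/-- The quiver has no oriented cycles. -/
def Acyclic : Prop :=
  ¬ ∃ (n : ℕ) (g : Fin (n + 1) → Q.A), ∀ k, Q.tgt (g k) = Q.src (g (k + 1))

/-- The double quiver: for each arrow `a : i → j` add a reverse arrow `a* : j → i`. -/
def double : FinQuiver where
  V := Q.V
  A := Q.A ⊕ Q.A
  src := Sum.elim Q.src Q.tgt
  tgt := Sum.elim Q.tgt Q.src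

/-- Positive roots: nonzero, nonnegative integer vectors with Tits form at most 1. -/
def PosRoot (x : Q.V → ℤ) : Prop := (∀ i, 0 ≤ x i) ∧ x ≠ 0 ∧ Q.titsForm x ≤ 1

end FinQuiver

/-- An affine quiver: connected, no loops, no oriented cycles, Tits form positive
semidefinite but not positive definite; `δ` is the minimal positive imaginary root,
generating the radical of the symmetrized Euler form. -/
structure AffineQuiver extends FinQuiver where
  noLoops : toFinQuiver.NoLoops
  connected : toFinQuiver.graph.Connected
  acyclic : toFinQuiver.Acyclic
  posSemidef : ∀ x : V → ℤ, 0 ≤ toFinQuiver.titsForm x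
  notPosDef : ∃ x : V → ℤ, x ≠ 0 ∧ toFinQuiver.titsForm x = 0
  δ : V → ℤ
  delta_pos : ∀ i, 0 < δ i
  radical_iff : ∀ x : V → ℤ,
    (∀ y : V → ℤ, toFinQuiver.eulerForm x y + toFinQuiver.eulerForm y x = 0) ↔
      ∃ m : ℤ, x = m • δ

/-- The defect `∂(x) = e(δ, x)`. -/
def AffineQuiver.defect (Q : AffineQuiver) (x : Q.V → ℤ) : ℤ :=
  Q.eulerForm Q.δ x

/-- A finite-dimensional representation of a finite quiver over a field `k`. -/
structure QRep (Q : FinQuiver) (k : Type) [Field k] where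
  carrier : Q.V → Type
  [acgI : ∀ i, AddCommGroup (carrier i)]
  [modI : ∀ i, Module k (carrier i)]
  [fdI : ∀ i, FiniteDimensional k (carrier i)]
  map : ∀ a : Q.A, carrier (Q.src a) →ₗ[k] carrier (Q.tgt a)

attribute [instance] QRep.acgI QRep.modI QRep.fdI

namespace QRep

variable {Q : FinQuiver} {k : Type} [Field k]

/-- The dimension vector of a representation. -/
noncomputable def dimVec (X : QRep Q k) : Q.V → ℤ :=
  fun i => (Module.finrank k (X.carrier i) : ℤ)

end QRep

/-- A subrepresentation: a family of subspaces stable under all the arrow maps. -/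
structure SubRep {Q : FinQuiver} {k : Type} [Field k] (X : QRep Q k) where
  mod : ∀ i, Submodule k (X.carrier i)
  stable : ∀ a : Q.A, ∀ x ∈ mod (Q.src a), X.map a x ∈ mod (Q.tgt a)

namespace SubRep

variable {Q : FinQuiver} {k : Type} [Field k] {X : QRep Q k}

/-- The dimension vector of a subrepresentation. -/
noncomputable def dimVec (U : SubRep X) : Q.V → ℤ :=
  fun i => (Module.finrank k (U.mod i) : ℤ)

/-- The representation carried by a subrepresentation. -/
def toRep (U : SubRep X) : QRep Q k where
  carrier i := U.mod i
  map a := (X.map a).restrict (U.stable a)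

end SubRep

namespace QRep

variable {Q : FinQuiver} {k : Type} [Field k]

/-- The quotient representation by a subrepresentation. -/
def quotBy (X : QRep Q k) (U : SubRep X) : QRep Q k where
  carrier i := X.carrier i ⧸ U.mod i
  map a := Submodule.mapQ _ _ (X.map a) (fun x hx => U.stable a x hx)

/-- A representation is indecomposable if it is nonzero and is not the internal direct
sum of two nonzero subrepresentations. -/
def Indecomposable (X : QRep Q k) : Prop :=
  (∃ i, 0 < Module.finrank k (X.carrier i)) ∧
    ∀ U W : SubRep X, (∀ i, IsCompl (U.mod i) (W.mod i)) →
      (∀ i, U.mod i = ⊥) ∨ (∀ i, W.mod i = ⊥)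

end QRep

/-- An isomorphism of representations of a quiver. -/
structure RepIso {Q : FinQuiver} {k : Type} [Field k] (X Y : QRep Q k) where
  equiv : ∀ i, X.carrier i ≃ₗ[k] Y.carrier i
  comm : ∀ (a : Q.A) (x : X.carrier (Q.src a)),
    equiv (Q.tgt a) (X.map a x) = Y.map a (equiv (Q.src a) x)

section Preprojective

variable {Q : FinQuiver} {k : Type} [Field k]

/-- The endomorphism of `⊕ᵢ Xᵢ` induced by the map attached to a single arrow. -/
def arrowEnd (X : QRep Q k) (a : Q.A) :
    (∀ i, X.carrier i) →ₗ[k] (∀ i, X.carrier i) :=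
  (LinearMap.single k X.carrier (Q.tgt a)).comp
    ((X.map a).comp (LinearMap.proj (Q.src a)))

/-- The preprojective relation for a representation of the double quiver:
at every vertex, `∑_{t(a)=i} X_a ∘ X_{a*} − ∑_{s(a)=i} X_{a*} ∘ X_a = 0`.
(Stated as one equation of endomorphisms of `⊕ᵢ Xᵢ`, which is equivalent since the
`i`-component of the equation is exactly the relation at the vertex `i`.) -/
def PreprojRel (Q : FinQuiver) {k : Type} [Field k] (X : QRep Q.double k) : Prop :=
  (∑ a : Q.A, (arrowEnd X (Sum.inl a)).comp (arrowEnd X (Sum.inr a)))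
    = ∑ a : Q.A, (arrowEnd X (Sum.inr a)).comp (arrowEnd X (Sum.inl a))

/-- Forget the reverse arrows: a representation of `Π_Q` gives a representation of `Q`. -/
def rho (X : QRep Q.double k) : QRep Q k where
  carrier := X.carrier
  acgI := X.acgI
  modI := X.modI
  fdI := X.fdI
  map a := X.map (Sum.inl a)

/-- A subrepresentation of a `Π_Q`-representation is in particular a subrepresentation of
the underlying `Q`-representation. -/
def rhoSub {X : QRep Q.double k} (U : SubRep X) : SubRep (rho X) where
  mod := U.mod
  stable a x hx := U.stable (Sum.inl a) x hx

/-- A representation of the double quiver is ρ-fixed if all reverse arrows act as zero. -/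
def RhoFixed (X : QRep Q.double k) : Prop :=
  ∀ a : Q.A, X.map (Sum.inr a) = 0

/-- Extend a representation of `Q` to the double quiver by letting all reverse arrows
act as zero. -/
def extendZero (P : QRep Q k) : QRep Q.double k where
  carrier := P.carrier
  acgI := P.acgI
  modI := P.modI
  fdI := P.fdI
  map b := match b with
    | Sum.inl a => P.map a
    | Sum.inr _ => 0

end Preprojective

section SubQuot

variable {Q : FinQuiver} {k : Type} [Field k]

/-- The subquotient representation `W / U` attached to nested subrepresentations
`U ≤ W` of `Z`. -/
def subQuot (Z : QRep Q k) (U W : SubRep Z) (h : ∀ i, U.mod i ≤ W.mod i) : QRep Q k where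
  carrier i := ↥(W.mod i) ⧸ (U.mod i).comap (W.mod i).subtype
  map a := Submodule.mapQ _ _ (W.toRep.map a)
    (fun x hx => U.stable a x.1 hx)

end SubQuot

/-- The endomorphism algebra `End(X)` of a quiver representation, as a subspace of
`Π i, End(Xᵢ)`: families of linear maps commuting with all arrow maps. -/
def endSubmodule {Q : FinQuiver} {k : Type} [Field k] (X : QRep Q k) :
    Submodule k (∀ i, X.carrier i →ₗ[k] X.carrier i) where
  carrier := {f | ∀ a : Q.A, (f (Q.tgt a)).comp (X.map a) = (X.map a).comp (f (Q.src a))}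
  add_mem' := by
    intro f g hf hg a
    simp only [Pi.add_apply, LinearMap.add_comp, LinearMap.comp_add, hf a, hg a]
  zero_mem' := by
    intro a
    simp only [Pi.zero_apply, LinearMap.zero_comp, LinearMap.comp_zero]
  smul_mem' := by
    intro c f hf a
    simp only [Pi.smul_apply, LinearMap.smul_comp, LinearMap.comp_smul, hf a]

/-!
Suppose `X` is indecomposable but not a brick. Reflecting `X` at a sink `i` replaces `Xᵢ` by the
kernel of `⨁ₐ X_{s(a)} → Xᵢ`. This keeps the endomorphism algebra, because the sum of the incoming
maps is onto `Xᵢ` unless the simple representation at `i` is a summand of `X`, and then `X` is that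
simple representation, a brick. One round of reflections through all vertices restores the
orientation and acts on the dimension vector by the Coxeter transformation `c`, given by
`e(x, c α) = -e(α, x)`. So every `cⁿ (dim X)` is again a dimension vector, in particular
nonnegative. But the Euler form takes the same value on all of these vectors and is positive
definite modulo `δ`, so infinitely many of them lie in one class modulo `δ`, and along this class
they would decrease without bound if the defect of `X` were negative. The dual representation
excludes positive defect in the same way.
-/

/-! ### Coxeter orbits of a semidefinite form -/

section Lattice

variable {L : Type*} [AddCommGroup L] {e : LinearMap.BilinForm ℤ L}

/-- A sequence obeying Serre duality `e(x, α (n + 1)) = -e(α n, x)`. For a nondegenerate form this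
says that `α (n + 1)` is the Coxeter transform of `α n`. -/
def IsCoxeterOrbit (e : LinearMap.BilinForm ℤ L) (α : ℕ → L) : Prop :=
  ∀ n x, e x (α (n + 1)) = -e (α n) x

theorem isSymm_add_flip (e : LinearMap.BilinForm ℤ L) : LinearMap.IsSymm (e + e.flip) :=
  ⟨fun x y => add_comm (e x y) (e y x)⟩

theorem add_flip_nonneg (he : ∀ x, 0 ≤ e x x) (x : L) : 0 ≤ (e + e.flip) x x :=
  add_nonneg (he x) (he x)

theorem mem_ker_add_flip_of_self_eq_zero (he : ∀ x, 0 ≤ e x x) {x : L} (hx : e x x = 0) :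
    x ∈ LinearMap.ker (e + e.flip) := by
  rw [← LinearMap.BilinForm.apply_apply_same_eq_zero_iff _ (add_flip_nonneg he)
    (isSymm_add_flip e)]
  simp [hx]

theorem apply_eq_neg_of_mem_ker_add_flip {δ : L} (hδ : δ ∈ LinearMap.ker (e + e.flip)) (x : L) :
    e δ x = -e x δ :=
  eq_neg_of_add_eq_zero_left (LinearMap.congr_fun hδ x)

theorem finite_image_add_flip_of_self_le [Module.Finite ℤ L] (he : ∀ x, 0 ≤ e x x) (c : ℤ) :
    ((e + e.flip) '' {x | e x x ≤ c}).Finite := by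
  obtain ⟨S, hS⟩ := Module.Finite.fg_top (R := ℤ) (M := L)
  set b : L → ℤ := fun y => 2 * c * (e + e.flip) y y
  have entry_sq_le : ∀ x, e x x ≤ c → ∀ y, (e + e.flip) x y ^ 2 ≤ b y := fun x hx y =>
    calc (e + e.flip) x y ^ 2 ≤ (e + e.flip) x x * (e + e.flip) y y :=
          LinearMap.BilinForm.apply_sq_le_of_symm _ (add_flip_nonneg he) (isSymm_add_flip e) x y
      _ ≤ 2 * c * (e + e.flip) y y := by
          refine mul_le_mul_of_nonneg_right ?_ (add_flip_nonneg he y)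
          simpa [two_mul] using add_le_add hx hx
  refine Set.Finite.of_injOn (f := fun φ (y : S) => φ y)
    (t := Set.univ.pi fun y : S => Set.Icc (-b y) (b y)) ?_ ?_
    (Set.Finite.pi fun y => Set.finite_Icc _ _)
  · rintro _ ⟨x, hx, rfl⟩ y -
    have := entry_sq_le x hx y
    exact ⟨by nlinarith, by nlinarith⟩
  · intro φ _ ψ _ h
    exact LinearMap.ext_on hS fun y hy => congr_fun h ⟨y, hy⟩

namespace IsCoxeterOrbit

variable {α : ℕ → L}

theorem apply_self (hα : IsCoxeterOrbit e α) (n : ℕ) : e (α n) (α n) = e (α 0) (α 0) := by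
  induction n with
  | zero => rfl
  | succ n ih =>
    have swap := hα n (α n)
    have self := hα n (α (n + 1))
    omega

theorem apply_of_mem_ker (hα : IsCoxeterOrbit e α) {δ : L}
    (hδ : δ ∈ LinearMap.ker (e + e.flip)) (n : ℕ) : e δ (α n) = e δ (α 0) := by
  induction n with
  | zero => rfl
  | succ n ih => rw [hα, ← ih, apply_eq_neg_of_mem_ker_add_flip hδ]

theorem apply_sum_Ico (hα : IsCoxeterOrbit e α) {r u : ℕ} (hru : r ≤ u) (x : L) :
    e x (∑ n ∈ Finset.Ico r u, α n) + e x (α u - α r) = -e (∑ n ∈ Finset.Ico r u, α n) x := by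
  rw [← map_add, ← Finset.sum_Ico_sub α hru, ← Finset.sum_add_distrib, map_sum]
  simp only [add_sub_cancel, map_sum, LinearMap.sum_apply, hα _ x, Finset.sum_neg_distrib]

theorem neg_of_sub_eq_smul (hα : IsCoxeterOrbit e α) (he : ∀ x, 0 ≤ e x x) {δ : L}
    (hker : LinearMap.ker (e + e.flip) = ℤ ∙ δ) (hneg : e δ (α 0) < 0) {r u : ℕ} (hru : r < u)
    {m : ℤ} (hm : α u - α r = m • δ) : m < 0 := by
  have hδ : δ ∈ LinearMap.ker (e + e.flip) := hker ▸ Submodule.mem_span_singleton_self δ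
  set s := ∑ n ∈ Finset.Ico r u, α n
  have defect_sum : e δ s = (u - r : ℕ) * e δ (α 0) := by
    simp [s, hα.apply_of_mem_ker hδ]
  have defect_sum_neg : e δ s < 0 := by
    rw [defect_sum]
    exact mul_neg_of_pos_of_neg (by exact_mod_cast Nat.sub_pos_of_lt hru) hneg
  have self_sum : 2 * e s s = m * e δ s := by
    have := hα.apply_sum_Ico hru.le s
    rw [hm, map_smul, smul_eq_mul] at this
    rw [apply_eq_neg_of_mem_ker_add_flip hδ]
    linarith
  have self_sum_pos : 0 < e s s := by
    refine (he s).lt_of_ne' fun h => defect_sum_neg.ne ?_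
    obtain ⟨c, hc⟩ := Submodule.mem_span_singleton.mp (hker ▸ mem_ker_add_flip_of_self_eq_zero he h)
    have := apply_eq_neg_of_mem_ker_add_flip hδ δ
    rw [← hc, map_smul, smul_eq_mul, show e δ δ = 0 by omega, mul_zero]
  exact neg_of_mul_pos_left (by omega) defect_sum_neg.le

theorem nonneg_apply_zero [Module.Finite ℤ L] (hα : IsCoxeterOrbit e α) (he : ∀ x, 0 ≤ e x x)
    {δ : L} (hker : LinearMap.ker (e + e.flip) = ℤ ∙ δ) (ℓ : L →ₗ[ℤ] ℤ) (hℓ : 0 < ℓ δ)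
    (hpos : ∀ n, 0 ≤ ℓ (α n)) : 0 ≤ e δ (α 0) := by
  by_contra! hneg
  have : Finite ((e + e.flip) '' {x | e x x ≤ e (α 0) (α 0)}) :=
    finite_image_add_flip_of_self_le he _
  obtain ⟨⟨φ, _⟩, hφ⟩ := Finite.exists_infinite_fiber fun n =>
    (⟨_, α n, (hα.apply_self n).le, rfl⟩ : (e + e.flip) '' {x | e x x ≤ e (α 0) (α 0)})
  set N : Set ℕ := {n | (e + e.flip) (α n) = φ}
  have hN : N.Infinite := by
    convert Set.infinite_coe_iff.mp hφ using 1
    ext n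
    exact Subtype.mk_eq_mk.symm
  obtain ⟨r, hr, hmin⟩ := exists_minimalFor_of_wellFoundedLT (· ∈ N) (fun n => (ℓ (α n)).toNat)
    hN.nonempty
  obtain ⟨u, hu, hru⟩ := hN.exists_gt r
  obtain ⟨m, hm⟩ : ∃ m : ℤ, m • δ = α u - α r := by
    rw [← Submodule.mem_span_singleton, ← hker, LinearMap.mem_ker, map_sub, hu, hr, sub_self]
  have descent : ℓ (α u) < ℓ (α r) := by
    have hmul := mul_neg_of_neg_of_pos (hα.neg_of_sub_eq_smul he hker hneg hru hm.symm) hℓ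
    have := congr_arg ℓ hm
    rw [map_smul, map_sub, smul_eq_mul] at this
    linarith
  have toNat_lt : (ℓ (α u)).toNat < (ℓ (α r)).toNat :=
    (Int.toNat_lt_toNat ((hpos u).trans_lt descent)).mpr descent
  exact toNat_lt.not_ge (hmin hu toNat_lt.le)

end IsCoxeterOrbit

end Lattice

/-! ### Euler forms and reorientation -/

section Reorient

variable {V A : Type*} [DecidableEq V]

/-- Reversing the arrows that cross the boundary of `F` turns the source map `s` into
`reorient F s t` and the target map `t` into `reorient F t s`. -/
def reorient (F : Finset V) (s t : A → V) (a : A) : V :=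
  if s a ∈ F ↔ t a ∈ F then s a else t a

theorem reorient_empty (s t : A → V) : reorient ∅ s t = s := by
  ext a; simp [reorient]

theorem reorient_univ [Fintype V] (s t : A → V) : reorient Finset.univ s t = s := by
  ext a; simp [reorient]

theorem reorient_singleton_reorient {F : Finset V} {i : V} (hi : i ∉ F) (s t : A → V) :
    reorient {i} (reorient F s t) (reorient F t s) = reorient (insert i F) s t := by
  ext a
  grind [reorient]

end Reorient

section EulerForm

variable {V A : Type*} [Fintype V] [Fintype A]

/-- The Euler form of the quiver with vertices `V`, arrows `A`, sources `s` and targets `t`, as a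
bilinear form. -/
def eulerBilin (s t : A → V) : LinearMap.BilinForm ℤ (V → ℤ) :=
  ∑ i, (LinearMap.mul ℤ ℤ).compl₁₂ (LinearMap.proj i) (LinearMap.proj i) -
    ∑ a, (LinearMap.mul ℤ ℤ).compl₁₂ (LinearMap.proj (s a)) (LinearMap.proj (t a))

theorem eulerBilin_apply (s t : A → V) (x y : V → ℤ) :
    eulerBilin s t x y = ∑ i, x i * y i - ∑ a, x (s a) * y (t a) := by
  simp [eulerBilin, LinearMap.sum_apply]

theorem flip_eulerBilin (s t : A → V) : (eulerBilin s t).flip = eulerBilin t s := by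
  refine LinearMap.ext₂ fun x y => ?_
  rw [LinearMap.BilinForm.flip_apply, eulerBilin_apply, eulerBilin_apply]
  simp only [mul_comm]

variable [DecidableEq V]

theorem eulerBilin_reorient_add_flip (F : Finset V) (s t : A → V) :
    eulerBilin (reorient F s t) (reorient F t s) +
        (eulerBilin (reorient F s t) (reorient F t s)).flip =
      eulerBilin s t + (eulerBilin s t).flip := by
  refine LinearMap.ext₂ fun x y => ?_
  simp only [LinearMap.add_apply, flip_eulerBilin, eulerBilin_apply, sub_add_sub_comm,
    ← Finset.sum_add_distrib]
  congr 1
  refine Finset.sum_congr rfl fun a _ => ?_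
  grind [reorient]

theorem eulerBilin_single_single {s t : A → V} {i j : V} (h : ∀ a, s a = j → t a ≠ i) :
    eulerBilin s t (Pi.single j 1) (Pi.single i 1) = if j = i then 1 else 0 := by
  rw [eulerBilin_apply, Finset.sum_eq_zero (s := Finset.univ (α := A)) fun a _ => by grind]
  simp [Pi.single_apply, eq_comm]

theorem eulerBilin_single_congr {s t : A → V} {i : V} {x y : V → ℤ} (hi : x i = y i)
    (h : ∀ a, t a = i → x (s a) = y (s a)) :
    eulerBilin s t x (Pi.single i 1) = eulerBilin s t y (Pi.single i 1) := by
  simp only [eulerBilin_apply]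
  congr 1
  · exact Finset.sum_congr rfl fun j _ => by grind
  · exact Finset.sum_congr rfl fun a _ => by grind

end EulerForm

/-! ### Linear algebra -/

section LinearAlgebra

variable {k M N P : Type*} [Field k] [AddCommGroup M] [Module k M] [AddCommGroup N] [Module k N]
  [AddCommGroup P] [Module k P]

theorem exists_comp_eq_of_ker_le_ker {f : M →ₗ[k] N} {g : M →ₗ[k] P}
    (h : LinearMap.ker f ≤ LinearMap.ker g) : ∃ ℓ : N →ₗ[k] P, ℓ ∘ₗ f = g := by
  obtain ⟨ℓ, hℓ⟩ := ((LinearMap.ker f).liftQ g h ∘ₗ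
    f.quotKerEquivRange.symm.toLinearMap).exists_extend
  refine ⟨ℓ, LinearMap.ext fun m => ?_⟩
  calc ℓ (f m) = (LinearMap.ker f).liftQ g h (f.quotKerEquivRange.symm
        (f.quotKerEquivRange (Submodule.Quotient.mk m))) := LinearMap.congr_fun hℓ ⟨f m, m, rfl⟩
    _ = g m := by rw [LinearEquiv.symm_apply_apply, Submodule.liftQ_apply]

theorem finrank_range_comp_comp_le {P' : Type*} [AddCommGroup P'] [Module k P']
    [FiniteDimensional k P] (f : P →ₗ[k] P') (g : N →ₗ[k] P) (h : M →ₗ[k] N) :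
    Module.finrank k (LinearMap.range (f ∘ₗ g ∘ₗ h)) ≤ Module.finrank k (LinearMap.range g) := by
  rw [LinearMap.range_comp]
  exact (Submodule.finrank_map_le f _).trans
    (Submodule.finrank_mono (LinearMap.range_comp_le_range h g))

theorem finrank_range_eq_of_eq_comp_comp [FiniteDimensional k M] [FiniteDimensional k N]
    {f : Module.End k M} {g : Module.End k N} {a c : N →ₗ[k] M} {b d : M →ₗ[k] N}
    (hf : f = a ∘ₗ g ∘ₗ b) (hg : g = d ∘ₗ f ∘ₗ c) :
    Module.finrank k (LinearMap.range f) = Module.finrank k (LinearMap.range g) :=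
  le_antisymm (hf ▸ finrank_range_comp_comp_le a g b) (hg ▸ finrank_range_comp_comp_le d f c)

section Compression

variable {ι : N →ₗ[k] M} {π : M →ₗ[k] N} (hπι : ∀ n, π (ι n) = n)
  {S : Subalgebra k (Module.End k M)} (hS : ∀ φ ∈ S, Commute (ι ∘ₗ π) φ)

/-- The algebra map `φ ↦ π ∘ φ ∘ ι` on operators commuting with the projection `ι ∘ π`. -/
def compression : S →ₐ[k] Module.End k N :=
  AlgHom.ofLinearMap (LinearMap.lcomp k N ι ∘ₗ LinearMap.llcomp k M M N π ∘ₗ S.val.toLinearMap)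
    (LinearMap.ext hπι) fun φ ψ => LinearMap.ext fun n => by
      have hψ := LinearMap.congr_fun (hS ψ ψ.2) (ι n)
      simp only [Module.End.mul_apply, LinearMap.comp_apply, hπι] at hψ
      exact congr_arg (fun m => π (φ.1 m)) hψ.symm

theorem compression_apply (φ : S) (n : N) : compression hπι hS φ n = π (φ.1 (ι n)) := rfl

theorem coe_compression (φ : S) (n : N) : ι (compression hπι hS φ n) = φ.1 (ι n) := by
  have hφ := LinearMap.congr_fun (hS φ φ.2) (ι n)
  simpa only [compression_apply, Module.End.mul_apply, LinearMap.comp_apply, hπι] using hφ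

end Compression

theorem dualMap_bijective [Module.IsReflexive k M] : Function.Bijective
    (LinearMap.dualMap : (M →ₗ[k] M) → Module.Dual k M →ₗ[k] Module.Dual k M) := by
  refine ⟨fun _ _ h => (Module.dualMap_dualMap_eq_iff k M).mp (congr_arg _ h), fun ψ => ?_⟩
  refine ⟨(Module.evalEquiv k M).symm ∘ₗ ψ.dualMap ∘ₗ Module.evalEquiv k M, ?_⟩
  ext
  simp

theorem finrank_submodule_pi {α : Type*} [Fintype α] {N : α → Type*} [∀ a, AddCommGroup (N a)]
    [∀ a, Module k (N a)] [∀ a, FiniteDimensional k (N a)] (p : ∀ a, Submodule k (N a)) :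
    Module.finrank k (Submodule.pi Set.univ p) = ∑ a, Module.finrank k (p a) := by
  have range_eq : LinearMap.range (LinearMap.piMap fun a => (p a).subtype) =
      Submodule.pi Set.univ p := by
    ext x
    exact ⟨fun ⟨y, hy⟩ a _ => hy ▸ (y a).2, fun hx => ⟨fun a => ⟨x a, hx a trivial⟩, rfl⟩⟩
  have injective : Function.Injective (LinearMap.piMap fun a => (p a).subtype) :=
    Function.Injective.piMap fun a => (p a).injective_subtype
  rw [← range_eq, LinearMap.finrank_range_of_inj injective, Module.finrank_pi_fintype]

/-- A `k`-algebra without nontrivial idempotents that is larger than `k`: the endomorphism algebra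
of an indecomposable object that is not a brick. -/
structure IsConnectedNonscalar (k R : Type*) [CommSemiring k] [Semiring R] [Algebra k R] :
    Prop where
  eq_zero_or_eq_one : ∀ e : R, IsIdempotentElem e → e = 0 ∨ e = 1
  not_surjective : ¬ Function.Surjective (algebraMap k R)

-- Preservation of squares, rather than of products, covers both isomorphisms and anti-isomorphisms.
theorem IsConnectedNonscalar.of_linearEquiv {k R S : Type*} [CommSemiring k] [Semiring R]
    [Algebra k R] [Semiring S] [Algebra k S] (hR : IsConnectedNonscalar k R) (f : R ≃ₗ[k] S)
    (map_one : f 1 = 1) (map_sq : ∀ x, f (x * x) = f x * f x) : IsConnectedNonscalar k S where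
  eq_zero_or_eq_one := f.surjective.forall.mpr fun e he => by
    have idem : IsIdempotentElem e := f.injective ((map_sq e).trans he)
    obtain rfl | rfl := hR.eq_zero_or_eq_one e idem
    exacts [Or.inl (map_zero f), Or.inr map_one]
  not_surjective h := hR.not_surjective fun r => by
    obtain ⟨c, hc⟩ := h (f r)
    refine ⟨c, f.injective ?_⟩
    rw [Algebra.algebraMap_eq_smul_one, map_smul, map_one, ← hc, Algebra.algebraMap_eq_smul_one]

end LinearAlgebra

/-! ### Representations on a total space -/

/-- A representation of the quiver with vertices `V`, arrows `A`, sources `s` and targets `t`,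
encoded on the direct sum `M` of its vertex spaces: `idem j` projects onto the space at `j`, and
`arrow a` is the map attached to `a`, extended by zero. -/
structure TotalRep (k M : Type*) [Field k] [AddCommGroup M] [Module k M] {V A : Type*} [Fintype V]
    (s t : A → V) where
  idem : V → Module.End k M
  arrow : A → Module.End k M
  complete : CompleteOrthogonalIdempotents idem
  idem_mul_arrow : ∀ a, idem (t a) * arrow a = arrow a
  arrow_mul_idem : ∀ a, arrow a * idem (s a) = arrow a

namespace TotalRep

variable {k M : Type*} [Field k] [AddCommGroup M] [Module k M] {V A : Type*} [Fintype V]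
  {s t : A → V} (X : TotalRep k M s t)

/-- The endomorphism algebra of a representation. -/
def endAlg : Subalgebra k (Module.End k M) :=
  Subalgebra.centralizer k (Set.range X.idem ∪ Set.range X.arrow)

/-- The dimension vector of a representation. -/
noncomputable def dim (j : V) : ℤ := Module.finrank k (LinearMap.range (X.idem j))

variable {X}

theorem mem_endAlg_iff {φ : Module.End k M} :
    φ ∈ X.endAlg ↔ (∀ j m, X.idem j (φ m) = φ (X.idem j m)) ∧
      ∀ a m, X.arrow a (φ m) = φ (X.arrow a m) := by
  simp only [endAlg, Subalgebra.mem_centralizer_iff, Set.mem_union, or_imp, forall_and,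
    Set.forall_mem_range, LinearMap.ext_iff, Module.End.mul_apply]

variable (X)

theorem idem_idem_self (j : V) (m : M) : X.idem j (X.idem j m) = X.idem j m :=
  LinearMap.congr_fun (X.complete.idem j) m

theorem idem_idem_of_ne {i j : V} (h : i ≠ j) (m : M) : X.idem i (X.idem j m) = 0 :=
  LinearMap.congr_fun (X.complete.ortho h) m

theorem idem_tgt_arrow (a : A) (m : M) : X.idem (t a) (X.arrow a m) = X.arrow a m :=
  LinearMap.congr_fun (X.idem_mul_arrow a) m

theorem arrow_idem_src (a : A) (m : M) : X.arrow a (X.idem (s a) m) = X.arrow a m :=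
  LinearMap.congr_fun (X.arrow_mul_idem a) m

theorem idem_arrow_of_ne {i : V} {a : A} (h : t a ≠ i) (m : M) : X.idem i (X.arrow a m) = 0 := by
  rw [← X.idem_tgt_arrow, X.idem_idem_of_ne h.symm]

theorem idem_arrow_of_eq {i : V} {a : A} (h : t a = i) (m : M) :
    X.idem i (X.arrow a m) = X.arrow a m := by
  rw [← h, X.idem_tgt_arrow]

theorem arrow_idem_of_ne {i : V} {a : A} (h : s a ≠ i) (m : M) : X.arrow a (X.idem i m) = 0 := by
  rw [← X.arrow_idem_src, X.idem_idem_of_ne h, map_zero]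

theorem sum_idem_apply (m : M) : ∑ j, X.idem j m = m := by
  rw [← LinearMap.sum_apply, X.complete.complete, Module.End.one_apply]

section Off

variable (i : V)

/-- The sum of the spaces at the vertices other than `i`. -/
abbrev off : Submodule k M := LinearMap.ker (X.idem i)

/-- The projection onto `X.off i`. -/
def toOff : M →ₗ[k] X.off i :=
  (LinearMap.id - X.idem i).codRestrict (X.off i) fun m => by
    simp [X.idem_idem_self]

theorem coe_toOff (m : M) : (X.toOff i m : M) = m - X.idem i m := rfl

theorem toOff_coe (m : X.off i) : X.toOff i m = m :=
  Subtype.ext (by rw [coe_toOff, LinearMap.mem_ker.mp m.2, sub_zero])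

theorem idem_apply_mem_off (j : V) {m : M} (hm : m ∈ X.off i) : X.idem j m ∈ X.off i := by
  obtain rfl | h := eq_or_ne i j
  · rwa [LinearMap.mem_ker, X.idem_idem_self]
  · exact X.idem_idem_of_ne h m

/-- The projections of the restriction of `X` to the vertices other than `i`. -/
def offIdem (j : V) : Module.End k (X.off i) :=
  (X.idem j).restrict fun _ => X.idem_apply_mem_off i j

/-- The arrows of the restriction of `X` to the vertices other than `i`. -/
def offArrow {i : V} {a : A} (h : t a ≠ i) : Module.End k (X.off i) :=
  (X.arrow a).restrict fun m _ => X.idem_arrow_of_ne h m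

@[simp]
theorem coe_offIdem (j : V) (m : X.off i) : (X.offIdem i j m : M) = X.idem j m := rfl

@[simp]
theorem coe_offArrow {i : V} {a : A} (h : t a ≠ i) (m : X.off i) :
    (X.offArrow h m : M) = X.arrow a m := rfl

theorem offIdem_self : X.offIdem i i = 0 :=
  LinearMap.ext fun m => Subtype.ext m.2

theorem offIdem_complete : CompleteOrthogonalIdempotents (X.offIdem i) :=
  CompleteOrthogonalIdempotents.iff_ortho_complete.mpr
    ⟨fun _ _ h => LinearMap.ext fun m => Subtype.ext (X.idem_idem_of_ne h m.1),
      LinearMap.ext fun m => Subtype.ext <| by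
        simp [LinearMap.sum_apply, X.sum_idem_apply]⟩

theorem toOff_idem (j : V) (m : M) : X.toOff i (X.idem j m) = X.offIdem i j (X.toOff i m) := by
  refine Subtype.ext ?_
  rw [coe_offIdem, coe_toOff, coe_toOff, map_sub]
  obtain rfl | h := eq_or_ne i j
  · rfl
  · rw [X.idem_idem_of_ne h, X.idem_idem_of_ne h.symm]

variable {i} {a : A}

theorem arrow_toOff (hs : s a ≠ i) (m : M) : X.arrow a (X.toOff i m) = X.arrow a m := by
  rw [coe_toOff, map_sub, X.arrow_idem_of_ne hs, sub_zero]

theorem toOff_arrow (hs : s a ≠ i) (ht : t a ≠ i) (m : M) :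
    X.toOff i (X.arrow a m) = X.offArrow ht (X.toOff i m) :=
  Subtype.ext <| by
    rw [coe_offArrow, coe_toOff, X.idem_arrow_of_ne ht, X.arrow_toOff hs, sub_zero]

theorem toOff_arrow_of_eq (ht : t a = i) (m : M) : X.toOff i (X.arrow a m) = 0 :=
  Subtype.ext <| by
    rw [coe_toOff, X.idem_arrow_of_eq ht, sub_self, ZeroMemClass.coe_zero]

variable (i)

theorem commute_subtype_comp_toOff : ∀ φ ∈ X.endAlg, Commute ((X.off i).subtype ∘ₗ X.toOff i) φ :=
  fun φ hφ => LinearMap.ext fun m => by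
    simp [coe_toOff, (mem_endAlg_iff.mp hφ).1]

/-- The action of `End X` on the vertices other than `i`. -/
def toOffEnd : X.endAlg →ₐ[k] Module.End k (X.off i) :=
  compression (ι := (X.off i).subtype) (X.toOff_coe i) (X.commute_subtype_comp_toOff i)

theorem coe_toOffEnd (φ : X.endAlg) (m : X.off i) : (X.toOffEnd i φ m : M) = φ.1 m :=
  coe_compression (ι := (X.off i).subtype) (X.toOff_coe i) (X.commute_subtype_comp_toOff i) φ m

theorem finrank_range_offIdem [FiniteDimensional k M] {j : V} (h : j ≠ i) :
    Module.finrank k (LinearMap.range (X.offIdem i j)) =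
      Module.finrank k (LinearMap.range (X.idem j)) := by
  refine finrank_range_eq_of_eq_comp_comp (a := X.toOff i) (b := (X.off i).subtype)
    (c := X.toOff i) (d := (X.off i).subtype) (LinearMap.ext fun m => ?_)
    (LinearMap.ext fun m => ?_)
  · simp [X.toOff_idem, X.toOff_coe]
  · simp [← X.toOff_idem, coe_toOff, X.idem_idem_of_ne h.symm]

end Off

/-! ### Reflection at a sink -/

section Reflection

variable {i : V}

/-- The families of vectors placed at the sources of the arrows with target `i`. -/
def sourceFamilies (i : V) : Submodule k ({a // t a = i} → X.off i) :=
  Submodule.pi Set.univ fun a => LinearMap.range (X.offIdem i (s a.1))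

theorem mem_sourceFamilies {κ : {a // t a = i} → X.off i} :
    κ ∈ X.sourceFamilies i ↔ ∀ a, X.offIdem i (s a.1) (κ a) = κ a := by
  simp only [sourceFamilies, Submodule.mem_pi, Set.mem_univ, true_implies,
    LinearMap.IsIdempotentElem.mem_range_iff ((X.offIdem_complete i).idem _)]

theorem offIdem_mem_sourceFamilies (κ : {a // t a = i} → X.off i) :
    (fun a => X.offIdem i (s a.1) (κ a)) ∈ X.sourceFamilies i :=
  X.mem_sourceFamilies.mpr fun a => LinearMap.congr_fun ((X.offIdem_complete i).idem _) (κ a)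

variable [Fintype A] [DecidableEq V]

/-- The sum of the maps attached to the arrows with target `i`. -/
def incoming (i : V) : ({a // t a = i} → X.off i) →ₗ[k] M :=
  ∑ a, X.arrow a.1 ∘ₗ (X.off i).subtype ∘ₗ LinearMap.proj a

theorem incoming_apply (κ : {a // t a = i} → X.off i) :
    X.incoming i κ = ∑ a, X.arrow a.1 (κ a) := by
  simp [incoming, LinearMap.sum_apply]

/-- The space at `i` of the reflected representation: the kernel of the map `⨁ X (s a) → X i`
given by the arrows `a` with target `i`. -/
abbrev relations (i : V) : Submodule k ({a // t a = i} → X.off i) :=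
  X.sourceFamilies i ⊓ LinearMap.ker (X.incoming i)

/-- The projections of the reflected representation. -/
def reflectIdem (i j : V) : Module.End k (X.relations i × X.off i) :=
  LinearMap.prodMap (if j = i then 1 else 0) (X.offIdem i j)

/-- The arrows of the reflected representation. -/
def reflectArrow (i : V) (a : A) : Module.End k (X.relations i × X.off i) :=
  LinearMap.inr k _ _ ∘ₗ
    if h : t a = i then LinearMap.proj ⟨a, h⟩ ∘ₗ (X.relations i).subtype ∘ₗ LinearMap.fst k _ _
    else X.offArrow h ∘ₗ LinearMap.snd k _ _

theorem reflectIdem_self_apply (v : X.relations i × X.off i) : X.reflectIdem i i v = (v.1, 0) := by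
  simp [reflectIdem, offIdem_self]

theorem reflectIdem_apply_of_ne {j : V} (h : j ≠ i) (v : X.relations i × X.off i) :
    X.reflectIdem i j v = (0, X.offIdem i j v.2) := by
  simp [reflectIdem, h]

theorem reflectArrow_apply {a : A} (h : t a = i) (v : X.relations i × X.off i) :
    X.reflectArrow i a v = (0, v.1.1 ⟨a, h⟩) := by
  simp [reflectArrow, h]

theorem reflectArrow_apply_of_ne {a : A} (h : t a ≠ i) (v : X.relations i × X.off i) :
    X.reflectArrow i a v = (0, X.offArrow h v.2) := by
  simp [reflectArrow, h]

theorem reflectIdem_complete (i : V) : CompleteOrthogonalIdempotents (X.reflectIdem i) := by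
  have pair : CompleteOrthogonalIdempotents fun j =>
      ((if j = i then 1 else 0 : Module.End k (X.relations i)), X.offIdem i j) := by
    refine CompleteOrthogonalIdempotents.iff_ortho_complete.mpr ⟨fun j l h => ?_, ?_⟩
    · refine Prod.ext ?_ ((X.offIdem_complete i).ortho h)
      obtain rfl | hj := eq_or_ne j i
      · simp [h.symm]
      · simp [hj]
    · refine Prod.ext (by simp [Prod.fst_sum]) ?_
      rw [Prod.snd_sum, Prod.snd_one, (X.offIdem_complete i).complete]
  exact pair.map (LinearMap.prodMapRingHom k _ _)

/-- The Bernstein–Gelfand–Ponomarev reflection of a representation at a sink. -/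
def reflect (hi : ∀ a, s a ≠ i) :
    TotalRep k (X.relations i × X.off i) (reorient {i} s t) (reorient {i} t s) where
  idem := X.reflectIdem i
  arrow := X.reflectArrow i
  complete := X.reflectIdem_complete i
  idem_mul_arrow a := LinearMap.ext fun v => by
    by_cases h : t a = i
    · have src : reorient {i} t s a = s a := by simp [reorient, h, hi a]
      rw [src, Module.End.mul_apply, X.reflectIdem_apply_of_ne (hi a), X.reflectArrow_apply h,
        X.mem_sourceFamilies.mp v.1.2.1 ⟨a, h⟩]
    · have tgt : reorient {i} t s a = t a := by simp [reorient, h, hi a]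
      rw [tgt, Module.End.mul_apply, X.reflectIdem_apply_of_ne h, X.reflectArrow_apply_of_ne h]
      exact Prod.ext rfl (Subtype.ext (X.idem_tgt_arrow a v.2))
  arrow_mul_idem a := LinearMap.ext fun v => by
    by_cases h : t a = i
    · have tgt : reorient {i} s t a = i := by simp [reorient, h, hi a]
      rw [tgt, Module.End.mul_apply, X.reflectIdem_self_apply, X.reflectArrow_apply h,
        X.reflectArrow_apply h]
    · have src : reorient {i} s t a = s a := by simp [reorient, h, hi a]
      rw [src, Module.End.mul_apply, X.reflectIdem_apply_of_ne (hi a),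
        X.reflectArrow_apply_of_ne h, X.reflectArrow_apply_of_ne h]
      exact Prod.ext rfl (Subtype.ext (X.arrow_idem_src a v.2))

theorem incoming_single [DecidableEq A] (a : {a // t a = i}) (m : X.off i) :
    X.incoming i (Pi.single a m) = X.arrow a.1 m := by
  rw [incoming_apply, Finset.sum_eq_single a (fun b _ h => by simp [h]) (by simp),
    Pi.single_eq_same]

/-- The operators on the vertices other than `i` that extend to an endomorphism of the reflection
of `X` at `i`, or equivalently of `X` itself when the arrows into `i` are jointly surjective. -/
structure IsOffEnd (θ : Module.End k (X.off i)) : Prop where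
  comm_idem : ∀ j m, X.offIdem i j (θ m) = θ (X.offIdem i j m)
  comm_arrow : ∀ a (h : t a ≠ i) m, X.offArrow h (θ m) = θ (X.offArrow h m)
  incoming_eq_zero : ∀ κ ∈ X.relations i, X.incoming i (fun a => θ (κ a)) = 0

theorem IsOffEnd.comp_mem_relations {θ : Module.End k (X.off i)} (hθ : X.IsOffEnd θ)
    {κ : {a // t a = i} → X.off i} (hκ : κ ∈ X.relations i) :
    (fun a => θ (κ a)) ∈ X.relations i :=
  ⟨X.mem_sourceFamilies.mpr fun a => by rw [hθ.comm_idem, X.mem_sourceFamilies.mp hκ.1 a],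
    hθ.incoming_eq_zero κ hκ⟩

theorem incoming_toOffEnd (φ : X.endAlg) (κ : {a // t a = i} → X.off i) :
    X.incoming i (fun a => X.toOffEnd i φ (κ a)) = φ.1 (X.incoming i κ) := by
  simp only [incoming_apply, coe_toOffEnd, (mem_endAlg_iff.mp φ.2).2, map_sum]

theorem isOffEnd_toOffEnd (φ : X.endAlg) : X.IsOffEnd (X.toOffEnd i φ) where
  comm_idem j m := Subtype.ext <| by
    simp [coe_toOffEnd, (mem_endAlg_iff.mp φ.2).1]
  comm_arrow a h m := Subtype.ext <| by
    simp [coe_toOffEnd, (mem_endAlg_iff.mp φ.2).2]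
  incoming_eq_zero κ hκ := by
    rw [incoming_toOffEnd, LinearMap.mem_ker.mp hκ.2, map_zero]

theorem range_incoming_le : LinearMap.range (X.incoming i) ≤ LinearMap.range (X.idem i) := by
  rintro _ ⟨κ, rfl⟩
  rw [incoming_apply]
  exact Submodule.sum_mem _ fun ⟨a, ha⟩ _ => ⟨_, ha ▸ X.idem_tgt_arrow a _⟩

theorem toOffEnd_injective (hσ : LinearMap.range (X.incoming i) = LinearMap.range (X.idem i)) :
    Function.Injective (X.toOffEnd i) := by
  rw [injective_iff_map_eq_zero]
  refine fun φ hφ => Subtype.ext (LinearMap.ext fun m => ?_)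
  have off_zero : φ.1 (X.toOff i m) = 0 := by rw [← coe_toOffEnd, hφ]; rfl
  obtain ⟨κ, hκ⟩ : X.idem i m ∈ LinearMap.range (X.incoming i) := hσ ▸ ⟨m, rfl⟩
  have sink_zero : φ.1 (X.idem i m) = 0 := by
    rw [← hκ, ← incoming_toOffEnd, hφ]
    exact map_zero (X.incoming i)
  rw [← sub_add_cancel m (X.idem i m), ← coe_toOff, map_add, off_zero, sink_zero, add_zero]
  rfl

theorem incoming_comp_offIdem (κ : {a // t a = i} → X.off i) :
    X.incoming i (fun a => X.offIdem i (s a.1) (κ a)) = X.incoming i κ := by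
  simp only [incoming_apply, coe_offIdem, arrow_idem_src]

theorem IsOffEnd.exists_comp_incoming_eq {θ : Module.End k (X.off i)} (hθ : X.IsOffEnd θ) :
    ∃ g : Module.End k M, ∀ κ, g (X.incoming i κ) = X.incoming i fun a => θ (κ a) := by
  have ker_le : LinearMap.ker (X.incoming i) ≤
      LinearMap.ker (X.incoming i ∘ₗ θ.compLeft {a // t a = i}) := fun κ hκ => by
    have hmem : (fun a => X.offIdem i (s a.1) (κ a)) ∈ X.relations i :=
      ⟨X.offIdem_mem_sourceFamilies κ, (X.incoming_comp_offIdem κ).trans hκ⟩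
    have := hθ.incoming_eq_zero _ hmem
    simp only [← hθ.comm_idem] at this
    rwa [incoming_comp_offIdem] at this
  obtain ⟨g, hg⟩ := exists_comp_eq_of_ker_le_ker ker_le
  exact ⟨g, LinearMap.congr_fun hg⟩

theorem apply_arrow_of_comp_incoming {θ : Module.End k (X.off i)} {g : Module.End k M}
    (hg : ∀ κ, g (X.incoming i κ) = X.incoming i fun a => θ (κ a)) {a : A} (hs : s a ≠ i)
    (ht : t a = i) (m : M) : g (X.arrow a m) = X.arrow a (θ (X.toOff i m)) := by
  classical
  have comp_single : (fun b => θ ((Pi.single ⟨a, ht⟩ (X.toOff i m) : {a // t a = i} → X.off i) b)) =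
      Pi.single ⟨a, ht⟩ (θ (X.toOff i m)) :=
    funext (Pi.apply_single (fun _ => θ) (fun _ => map_zero θ) _ _)
  rw [← X.arrow_toOff hs, ← X.incoming_single ⟨a, ht⟩, hg, comp_single]
  exact X.incoming_single ⟨a, ht⟩ _

theorem IsOffEnd.mem_range_toOffEnd (hi : ∀ a, s a ≠ i)
    (hσ : LinearMap.range (X.incoming i) = LinearMap.range (X.idem i))
    {θ : Module.End k (X.off i)} (hθ : X.IsOffEnd θ) : θ ∈ (X.toOffEnd i).range := by
  obtain ⟨g, hg⟩ := hθ.exists_comp_incoming_eq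
  have idem_g : ∀ m, X.idem i (g (X.idem i m)) = g (X.idem i m) := fun m => by
    obtain ⟨κ, hκ⟩ : X.idem i m ∈ LinearMap.range (X.incoming i) := hσ ▸ ⟨m, rfl⟩
    rw [← hκ, hg, ← LinearMap.IsIdempotentElem.mem_range_iff (X.complete.idem i), ← hσ]
    exact ⟨_, rfl⟩
  set φ : Module.End k M := g ∘ₗ X.idem i + (X.off i).subtype ∘ₗ θ ∘ₗ X.toOff i
  have φ_apply : ∀ m, φ m = g (X.idem i m) + θ (X.toOff i m) := fun _ => rfl
  have hφ : φ ∈ X.endAlg := by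
    refine mem_endAlg_iff.mpr ⟨fun j m => ?_, fun a m => ?_⟩
    · rw [φ_apply, φ_apply, map_add, X.toOff_idem, ← hθ.comm_idem, coe_offIdem]
      obtain rfl | h := eq_or_ne j i
      · rw [idem_g, X.idem_idem_self]
      · rw [X.idem_idem_of_ne h.symm, ← idem_g, X.idem_idem_of_ne h, map_zero]
    · rw [φ_apply, φ_apply, map_add, ← idem_g, X.arrow_idem_of_ne (hi a), zero_add]
      by_cases h : t a = i
      · rw [X.idem_arrow_of_eq h, X.toOff_arrow_of_eq h, X.apply_arrow_of_comp_incoming hg (hi a) h,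
          map_zero, ZeroMemClass.coe_zero, add_zero]
      · rw [X.idem_arrow_of_ne h, X.toOff_arrow (hi a) h, ← hθ.comm_arrow, map_zero, zero_add,
          coe_offArrow]
  refine ⟨⟨φ, hφ⟩, LinearMap.ext fun m => Subtype.ext ((X.coe_toOffEnd i ⟨φ, hφ⟩ m).trans ?_)⟩
  calc φ m = g (X.idem i m) + θ (X.toOff i m) := φ_apply m
    _ = θ m := by rw [LinearMap.mem_ker.mp m.2, map_zero, zero_add, toOff_coe]

theorem commute_inr_comp_snd (hi : ∀ a, s a ≠ i) : ∀ φ ∈ (X.reflect hi).endAlg,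
    Commute (LinearMap.inr k (X.relations i) (X.off i) ∘ₗ LinearMap.snd k _ _) φ :=
  fun φ hφ => LinearMap.ext fun v => by
    have inr_snd : ∀ w : X.relations i × X.off i, ((0, w.2) : X.relations i × X.off i) =
        w - (X.reflect hi).idem i w := fun w => by
      simp [reflect, reflectIdem_self_apply, Prod.ext_iff]
    simp only [Module.End.mul_apply, LinearMap.comp_apply, LinearMap.snd_apply,
      LinearMap.inr_apply, inr_snd, map_sub, (mem_endAlg_iff.mp hφ).1]

/-- The action of the endomorphisms of the reflection of `X` at `i` on the vertices other
than `i`. -/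
def reflectToOffEnd (hi : ∀ a, s a ≠ i) : (X.reflect hi).endAlg →ₐ[k] Module.End k (X.off i) :=
  compression (ι := LinearMap.inr k (X.relations i) (X.off i)) (fun _ => rfl)
    (X.commute_inr_comp_snd hi)

theorem apply_zero_prod {hi : ∀ a, s a ≠ i} (φ : (X.reflect hi).endAlg) (m : X.off i) :
    φ.1 (0, m) = (0, X.reflectToOffEnd hi φ m) :=
  (coe_compression (ι := LinearMap.inr k (X.relations i) (X.off i)) (fun _ => rfl)
    (X.commute_inr_comp_snd hi) φ m).symm

theorem snd_apply_eq {hi : ∀ a, s a ≠ i} (φ : (X.reflect hi).endAlg)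
    (v : X.relations i × X.off i) : (φ.1 v).2 = X.reflectToOffEnd hi φ v.2 := by
  have snd_eq := congr_arg Prod.snd (LinearMap.congr_fun (X.commute_inr_comp_snd hi φ.1 φ.2) v)
  exact snd_eq

theorem fst_apply_eq {hi : ∀ a, s a ≠ i} (φ : (X.reflect hi).endAlg)
    (v : X.relations i × X.off i) (a : {a // t a = i}) :
    (φ.1 v).1.1 a = X.reflectToOffEnd hi φ (v.1.1 a) := by
  have := (mem_endAlg_iff.mp φ.2).2 a.1 v
  simp only [reflect, X.reflectArrow_apply a.2, apply_zero_prod] at this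
  exact congr_arg Prod.snd this

theorem reflectToOffEnd_injective (hi : ∀ a, s a ≠ i) :
    Function.Injective (X.reflectToOffEnd hi) := fun φ ψ h =>
  Subtype.ext <| LinearMap.ext fun v => Prod.ext
    (Subtype.ext <| funext fun a => by rw [fst_apply_eq, fst_apply_eq, h])
    (by rw [snd_apply_eq, snd_apply_eq, h])

theorem isOffEnd_reflectToOffEnd {hi : ∀ a, s a ≠ i} (φ : (X.reflect hi).endAlg) :
    X.IsOffEnd (X.reflectToOffEnd hi φ) where
  comm_idem j m := by
    obtain rfl | h := eq_or_ne j i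
    · simp [offIdem_self]
    · have := (mem_endAlg_iff.mp φ.2).1 j (0, m)
      simp only [reflect, X.reflectIdem_apply_of_ne h, apply_zero_prod] at this
      exact congr_arg Prod.snd this
  comm_arrow a h m := by
    have := (mem_endAlg_iff.mp φ.2).2 a (0, m)
    simp only [reflect, X.reflectArrow_apply_of_ne h, apply_zero_prod] at this
    exact congr_arg Prod.snd this
  incoming_eq_zero κ hκ := by
    have apply_κ : (fun a => X.reflectToOffEnd hi φ (κ a)) = (φ.1 (⟨κ, hκ⟩, 0)).1.1 :=
      funext fun a => (X.fst_apply_eq φ (⟨κ, hκ⟩, 0) a).symm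
    rw [apply_κ]
    exact (φ.1 (⟨κ, hκ⟩, 0)).1.2.2

theorem IsOffEnd.mem_range_reflectToOffEnd (hi : ∀ a, s a ≠ i) {θ : Module.End k (X.off i)}
    (hθ : X.IsOffEnd θ) : θ ∈ (X.reflectToOffEnd hi).range := by
  set ρ : Module.End k (X.relations i) :=
    (θ.compLeft {a // t a = i}).restrict fun _ => hθ.comp_mem_relations
  have ρ_apply : ∀ κ a, (ρ κ).1 a = θ (κ.1 a) := fun _ _ => rfl
  have hρ : ρ.prodMap θ ∈ (X.reflect hi).endAlg := by
    refine mem_endAlg_iff.mpr ⟨fun j v => ?_, fun a v => ?_⟩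
    · obtain rfl | h := eq_or_ne j i
      · simp [reflect, reflectIdem_self_apply]
      · simp [reflect, X.reflectIdem_apply_of_ne h, hθ.comm_idem]
    · by_cases h : t a = i
      · simp [reflect, X.reflectArrow_apply h, ρ_apply]
      · simp [reflect, X.reflectArrow_apply_of_ne h, hθ.comm_arrow]
  exact ⟨⟨ρ.prodMap θ, hρ⟩, rfl⟩

/-- Reflection at a sink keeps the endomorphism algebra of a representation whose maps into the
sink are jointly surjective. -/
noncomputable def endAlgEquivReflect (hi : ∀ a, s a ≠ i)
    (hσ : LinearMap.range (X.incoming i) = LinearMap.range (X.idem i)) :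
    X.endAlg ≃ₐ[k] (X.reflect hi).endAlg :=
  have range_eq : (X.toOffEnd i).range = (X.reflectToOffEnd hi).range := le_antisymm
    (by rintro _ ⟨φ, rfl⟩; exact (X.isOffEnd_toOffEnd φ).mem_range_reflectToOffEnd X hi)
    (by rintro _ ⟨φ, rfl⟩; exact (X.isOffEnd_reflectToOffEnd φ).mem_range_toOffEnd X hi hσ)
  (AlgEquiv.ofInjective _ (X.toOffEnd_injective hσ)).trans <|
    (Subalgebra.equivOfEq _ _ range_eq).trans
      (AlgEquiv.ofInjective _ (X.reflectToOffEnd_injective hi)).symm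

theorem smulRight_mem_endAlg (hi : ∀ a, s a ≠ i) {ξ : M →ₗ[k] k}
    (hξ : LinearMap.range (X.incoming i) ⊔ X.off i ≤ LinearMap.ker ξ) {v : M}
    (hv : X.idem i v = v) : ξ.smulRight v ∈ X.endAlg := by
  classical
  obtain ⟨ξ_incoming, ξ_off⟩ := sup_le_iff.mp hξ
  refine mem_endAlg_iff.mpr ⟨fun j m => ?_, fun a m => ?_⟩
  · rw [LinearMap.smulRight_apply, LinearMap.smulRight_apply, map_smul]
    obtain rfl | h := eq_or_ne j i
    · have : ξ (X.toOff j m) = 0 := ξ_off (X.toOff j m).2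
      rw [coe_toOff, map_sub, sub_eq_zero] at this
      rw [hv, this]
    · have : ξ (X.idem j m) = 0 := ξ_off (X.idem_idem_of_ne h.symm m)
      rw [this, zero_smul, ← hv, X.idem_idem_of_ne h, smul_zero]
  · have : ξ (X.arrow a m) = 0 := by
      by_cases h : t a = i
      · exact ξ_incoming ⟨_, (X.incoming_single ⟨a, h⟩ _).trans (X.arrow_toOff (hi a) m)⟩
      · exact ξ_off (X.idem_arrow_of_ne h m)
    rw [LinearMap.smulRight_apply, LinearMap.smulRight_apply, this, zero_smul, map_smul, ← hv,
      X.arrow_idem_of_ne (hi a), smul_zero]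

-- If the arrows into the sink `i` do not span the space at `i`, then `X` has the simple
-- representation at `i` as a direct summand.
theorem range_incoming_eq (hi : ∀ a, s a ≠ i) (hX : IsConnectedNonscalar k X.endAlg) :
    LinearMap.range (X.incoming i) = LinearMap.range (X.idem i) := by
  refine X.range_incoming_le.antisymm fun v hv => ?_
  replace hv : X.idem i v = v :=
    (LinearMap.IsIdempotentElem.mem_range_iff (X.complete.idem i)).mp hv
  by_contra hv'
  have v_notMem : v ∉ LinearMap.range (X.incoming i) ⊔ X.off i := by
    rw [Submodule.mem_sup]
    rintro ⟨r, hr, m, hm, rfl⟩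
    have idem_r := (LinearMap.IsIdempotentElem.mem_range_iff (X.complete.idem i)).mp
      (X.range_incoming_le hr)
    rw [map_add, idem_r, LinearMap.mem_ker.mp hm, add_zero] at hv
    exact hv' (hv ▸ hr)
  obtain ⟨ξ, hξv, hξ⟩ := Submodule.exists_le_ker_of_notMem v_notMem
  set η : M →ₗ[k] k := (ξ v)⁻¹ • ξ
  have hηv : η v = 1 := inv_mul_cancel₀ hξv
  have hη : LinearMap.range (X.incoming i) ⊔ X.off i ≤ LinearMap.ker η := fun m hm => by
    simp [η, LinearMap.mem_ker.mp (hξ hm)]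
  set e : X.endAlg := ⟨η.smulRight v, X.smulRight_mem_endAlg hi hη hv⟩
  have he : IsIdempotentElem e := Subtype.ext <| LinearMap.ext fun m => by
    simp [e, hηv]
  have e_apply : ∀ m, e.1 m = η m • v := fun _ => rfl
  have v_ne : v ≠ 0 := fun h => hξv (by rw [h, map_zero])
  have e_eq_one : e = 1 := (hX.eq_zero_or_eq_one e he).resolve_left fun h => v_ne <| by
    simpa [h, hηv] using (e_apply v).symm
  refine hX.not_surjective fun φ => ⟨η (φ.1 v), Subtype.ext (LinearMap.ext fun m => ?_)⟩
  have smul_v : ∀ m, η m • v = m := fun m => by rw [← e_apply, e_eq_one]; rfl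
  calc η (φ.1 v) • m = η m • (η (φ.1 v) • v) := by rw [smul_comm, smul_v]
    _ = φ.1 m := by rw [smul_v, ← map_smul, smul_v]

theorem isConnectedNonscalar_reflect (hi : ∀ a, s a ≠ i) (hX : IsConnectedNonscalar k X.endAlg) :
    IsConnectedNonscalar k (X.reflect hi).endAlg :=
  let E := X.endAlgEquivReflect hi (X.range_incoming_eq hi hX)
  hX.of_linearEquiv E.toLinearEquiv (map_one E) fun φ => map_mul E φ φ

section Dimension

variable [FiniteDimensional k M]

theorem dim_reflect_of_ne (hi : ∀ a, s a ≠ i) {j : V} (h : j ≠ i) :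
    (X.reflect hi).dim j = X.dim j := by
  have offIdem_eq := finrank_range_eq_of_eq_comp_comp (f := X.reflectIdem i j) (g := X.offIdem i j)
    (a := LinearMap.inr k _ _) (b := LinearMap.snd k _ _) (c := LinearMap.inr k _ _)
    (d := LinearMap.snd k _ _) (LinearMap.ext fun v => X.reflectIdem_apply_of_ne h v)
    (LinearMap.ext fun m => by simp [X.reflectIdem_apply_of_ne h])
  exact congr_arg Nat.cast (offIdem_eq.trans (X.finrank_range_offIdem i h))

theorem finrank_sourceFamilies (hi : ∀ a, s a ≠ i) :
    (Module.finrank k (X.sourceFamilies i) : ℤ) = ∑ a : {a // t a = i}, X.dim (s a.1) := by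
  rw [sourceFamilies, finrank_submodule_pi, Nat.cast_sum]
  exact Finset.sum_congr rfl fun a _ => congr_arg _ (X.finrank_range_offIdem i (hi a.1))

theorem finrank_range_incoming_add_finrank_relations :
    Module.finrank k (LinearMap.range (X.incoming i)) + Module.finrank k (X.relations i) =
      Module.finrank k (X.sourceFamilies i) := by
  have range_eq : LinearMap.range ((X.incoming i).domRestrict (X.sourceFamilies i)) =
      LinearMap.range (X.incoming i) := by
    refine le_antisymm (LinearMap.range_domRestrict_le_range _ _) ?_
    rintro _ ⟨κ, rfl⟩
    exact ⟨⟨_, X.offIdem_mem_sourceFamilies κ⟩, X.incoming_comp_offIdem κ⟩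
  rw [relations, ← Submodule.map_comap_subtype, ← LinearMap.ker_domRestrict,
    Submodule.finrank_map_subtype_eq, ← range_eq, LinearMap.finrank_range_add_finrank_ker]

theorem dim_reflect_self (hi : ∀ a, s a ≠ i)
    (hσ : LinearMap.range (X.incoming i) = LinearMap.range (X.idem i)) :
    (X.reflect hi).dim i = ∑ a : {a // t a = i}, X.dim (s a.1) - X.dim i := by
  have range_eq : LinearMap.range (X.reflectIdem i i) = LinearMap.range (LinearMap.inl k _ _) := by
    rw [show X.reflectIdem i i = LinearMap.inl k _ _ ∘ₗ LinearMap.fst k _ _ from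
      LinearMap.ext X.reflectIdem_self_apply,
      LinearMap.range_comp_of_range_eq_top _ (LinearMap.range_eq_top.mpr Prod.fst_surjective)]
  have dim_eq : (X.reflect hi).dim i = Module.finrank k (X.relations i) := by
    rw [dim, reflect, range_eq, LinearMap.finrank_range_of_inj LinearMap.inl_injective]
  rw [dim_eq, ← X.finrank_sourceFamilies hi, ← X.finrank_range_incoming_add_finrank_relations, hσ,
    dim, Nat.cast_add, add_sub_cancel_left]

theorem dim_reflect (hi : ∀ a, s a ≠ i)
    (hσ : LinearMap.range (X.incoming i) = LinearMap.range (X.idem i)) :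
    (X.reflect hi).dim = X.dim - ((eulerBilin s t + (eulerBilin s t).flip) X.dim (Pi.single i 1)) •
      Pi.single i 1 := by
  have sink : eulerBilin t s X.dim (Pi.single i 1) = X.dim i := by
    simp [eulerBilin_apply, hi, Pi.single_apply]
  have sources : eulerBilin s t X.dim (Pi.single i 1) =
      X.dim i - ∑ a : {a // t a = i}, X.dim (s a.1) := by
    rw [← Finset.sum_subtype (Finset.univ.filter fun a => t a = i) (by simp) fun a => X.dim (s a)]
    simp [eulerBilin_apply, Pi.single_apply, Finset.sum_filter, eq_comm]
  ext j
  rw [LinearMap.add_apply, LinearMap.add_apply, flip_eulerBilin, sink, sources]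
  obtain rfl | h := eq_or_ne j i
  · rw [X.dim_reflect_self hi hσ]
    simp
  · simp [X.dim_reflect_of_ne hi h, h]

end Dimension

end Reflection

/-! ### Duality -/

section Dual

/-- The dual of a representation, a representation of the opposite quiver. -/
def dual : TotalRep k (Module.Dual k M) t s where
  idem j := (X.idem j).dualMap
  arrow a := (X.arrow a).dualMap
  complete := CompleteOrthogonalIdempotents.iff_ortho_complete.mpr
    ⟨fun i j h => LinearMap.ext fun f => LinearMap.ext fun m => by
        simp [X.idem_idem_of_ne h.symm],
      LinearMap.ext fun f => LinearMap.ext fun m => by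
        simp [LinearMap.sum_apply, ← map_sum, X.sum_idem_apply]⟩
  idem_mul_arrow a := LinearMap.ext fun f => LinearMap.ext fun m => by
    simp [X.arrow_idem_src]
  arrow_mul_idem a := LinearMap.ext fun f => LinearMap.ext fun m => by
    simp [X.idem_tgt_arrow]

theorem dim_dual : X.dual.dim = X.dim :=
  funext fun j => congr_arg Nat.cast (LinearMap.finrank_range_dualMap_eq_finrank_range (X.idem j))

variable [FiniteDimensional k M]

theorem dualMap_mem_endAlg_dual {φ : Module.End k M} :
    LinearMap.dualMap φ ∈ X.dual.endAlg ↔ φ ∈ X.endAlg := by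
  simp only [endAlg, dual, Subalgebra.mem_centralizer_iff, Set.mem_union, or_imp, forall_and,
    Set.forall_mem_range, Module.End.mul_eq_comp, LinearMap.dualMap_comp_dualMap,
    dualMap_bijective.injective.eq_iff, eq_comm]

/-- Duality is an anti-isomorphism of endomorphism algebras. -/
noncomputable def endAlgEquivDual : X.endAlg ≃ₗ[k] X.dual.endAlg :=
  LinearEquiv.ofBijective
    { toFun := fun φ => ⟨LinearMap.dualMap φ.1, X.dualMap_mem_endAlg_dual.mpr φ.2⟩
      map_add' := fun φ ψ => Subtype.ext (map_add Module.Dual.transpose φ.1 ψ.1)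
      map_smul' := fun c φ => Subtype.ext (map_smul Module.Dual.transpose c φ.1) }
    ⟨fun φ ψ h => Subtype.ext (dualMap_bijective.injective (congr_arg Subtype.val h)), by
      rintro ⟨ψ, hψ⟩
      obtain ⟨φ, rfl⟩ := dualMap_bijective.surjective ψ
      exact ⟨⟨φ, X.dualMap_mem_endAlg_dual.mp hψ⟩, rfl⟩⟩

theorem coe_endAlgEquivDual (φ : X.endAlg) :
    (X.endAlgEquivDual φ : Module.End k (Module.Dual k M)) = LinearMap.dualMap φ.1 := rfl

theorem isConnectedNonscalar_dual (hX : IsConnectedNonscalar k X.endAlg) :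
    IsConnectedNonscalar k X.dual.endAlg :=
  hX.of_linearEquiv X.endAlgEquivDual (Subtype.ext LinearMap.dualMap_id) fun φ => Subtype.ext <| by
    rw [MulMemClass.coe_mul, coe_endAlgEquivDual, coe_endAlgEquivDual, Module.End.mul_eq_comp,
      LinearMap.dualMap_comp_dualMap]
    rfl

end Dual

end TotalRep

/-! ### Coxeter translation -/

section Translation

universe u

variable {k : Type u} [Field k] {V : Type*} [Fintype V] {A : Type u} {s t : A → V} {α β : V → ℤ}

variable (k s t) in
/-- `α` is the dimension vector of an indecomposable representation that is not a brick. -/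
def IsNonbrickDim (α : V → ℤ) : Prop :=
  ∃ (M : Type u) (_ : AddCommGroup M) (_ : Module k M) (_ : FiniteDimensional k M)
    (X : TotalRep k M s t), IsConnectedNonscalar k X.endAlg ∧ X.dim = α

namespace IsNonbrickDim

theorem nonneg (h : IsNonbrickDim k s t α) (i : V) : 0 ≤ α i := by
  obtain ⟨M, _, _, _, X, -, rfl⟩ := h
  exact Nat.cast_nonneg _

theorem opposite (h : IsNonbrickDim k s t α) : IsNonbrickDim k t s α := by
  obtain ⟨M, _, _, _, X, hX, rfl⟩ := h
  exact ⟨_, _, _, inferInstance, X.dual, X.isConnectedNonscalar_dual hX, X.dim_dual⟩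

variable [Fintype A]

theorem reflect [DecidableEq V] (h : IsNonbrickDim k s t α) {i : V} (hi : ∀ a, s a ≠ i) :
    IsNonbrickDim k (reorient {i} s t) (reorient {i} t s)
      (α - ((eulerBilin s t + (eulerBilin s t).flip) α (Pi.single i 1)) • Pi.single i 1) := by
  obtain ⟨M, _, _, _, X, hX, rfl⟩ := h
  exact ⟨_, _, _, inferInstance, X.reflect hi, X.isConnectedNonscalar_reflect hi hX,
    X.dim_reflect hi (X.range_incoming_eq hi hX)⟩

end IsNonbrickDim

variable [Fintype A]

variable (s t) in
/-- `β` arises from `α` by reflecting once at each vertex of `F`. For `F` the set of all vertices,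
this says that `β` is the Coxeter transform of `α`. -/
structure IsPartialCoxeter [DecidableEq V] (F : Finset V) (α β : V → ℤ) : Prop where
  eq_of_notMem : ∀ j ∉ F, β j = α j
  eulerBilin_single : ∀ j ∈ F,
    eulerBilin s t (Pi.single j 1) β = -eulerBilin s t α (Pi.single j 1)

theorem IsPartialCoxeter.insert [DecidableEq V] {F : Finset V} (hF : ∀ a, s a ∈ F → t a ∈ F)
    (h : IsPartialCoxeter s t F α β) {i : V} (hi : i ∉ F) (hit : ∀ a, s a = i → t a ∈ F) :
    IsPartialCoxeter s t (insert i F) α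
      (β - ((eulerBilin s t + (eulerBilin s t).flip) β (Pi.single i 1)) • Pi.single i 1) where
  eq_of_notMem j hj := by
    obtain ⟨hji, hjF⟩ := not_or.mp (Finset.mem_insert.not.mp hj)
    simp [hji, h.eq_of_notMem j hjF]
  eulerBilin_single j hj := by
    have no_arrow : ∀ a, s a = j → t a ≠ i := by grind
    rw [map_sub, map_smul, eulerBilin_single_single no_arrow]
    obtain rfl | hji := eq_or_ne j i
    · have agree : eulerBilin s t β (Pi.single j 1) = eulerBilin s t α (Pi.single j 1) :=
        eulerBilin_single_congr (h.eq_of_notMem j hi) fun a ha => h.eq_of_notMem _ (by grind)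
      simp [← agree, LinearMap.BilinForm.flip_apply]
    · simp [hji, h.eulerBilin_single j (Finset.mem_of_mem_insert_of_ne hj hji)]

theorem IsNonbrickDim.exists_coxeter (hwf : WellFounded fun j i => ∃ a, s a = i ∧ t a = j)
    (h : IsNonbrickDim k s t α) :
    ∃ β, IsNonbrickDim k s t β ∧ ∀ x, eulerBilin s t x β = -eulerBilin s t α x := by
  classical
  set reached : Set (Finset V) := {F | (∀ a, s a ∈ F → t a ∈ F) ∧
    ∃ β, IsNonbrickDim k (reorient F s t) (reorient F t s) β ∧ IsPartialCoxeter s t F α β}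
  have empty_mem : ∅ ∈ reached :=
    ⟨by simp, α, by rwa [reorient_empty, reorient_empty], ⟨fun _ _ => rfl, by simp⟩⟩
  obtain ⟨F, ⟨hF, β, hβ, hαβ⟩, hmax⟩ := (Set.toFinite reached).exists_maximal ⟨∅, empty_mem⟩
  have eq_univ : F = Finset.univ := by
    by_contra hne
    obtain ⟨i, hi⟩ : ∃ i, i ∉ F := by simpa [Finset.eq_univ_iff_forall] using hne
    obtain ⟨i, hi, hmin⟩ := hwf.has_min {i | i ∉ F} ⟨i, hi⟩
    have hit : ∀ a, s a = i → t a ∈ F := fun a ha => by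
      by_contra hta
      exact hmin _ hta ⟨a, ha, rfl⟩
    have sink : ∀ a, reorient F s t a ≠ i := by
      intro a; grind [reorient]
    have insert_mem : insert i F ∈ reached := by
      refine ⟨by grind, _, ?_, hαβ.insert hF hi hit⟩
      rw [← eulerBilin_reorient_add_flip F, ← reorient_singleton_reorient hi,
        ← reorient_singleton_reorient hi]
      exact hβ.reflect sink
    exact hi (hmax insert_mem (Finset.subset_insert i F) (Finset.mem_insert_self i F))
  subst eq_univ
  rw [reorient_univ, reorient_univ] at hβ
  have eq_neg : (eulerBilin s t).flip β = -eulerBilin s t α :=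
    LinearMap.pi_ext' fun j => LinearMap.ext_ring (hαβ.eulerBilin_single j (Finset.mem_univ j))
  exact ⟨β, hβ, LinearMap.congr_fun eq_neg⟩

theorem IsNonbrickDim.exists_isCoxeterOrbit
    (hwf : WellFounded fun j i => ∃ a, s a = i ∧ t a = j) (h : IsNonbrickDim k s t α) :
    ∃ γ : ℕ → V → ℤ, γ 0 = α ∧ IsCoxeterOrbit (eulerBilin s t) γ ∧
      ∀ n, IsNonbrickDim k s t (γ n) := by
  choose next hnext hcoxeter using
    fun x : {x // IsNonbrickDim k s t x} => x.2.exists_coxeter hwf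
  let γ : ℕ → {x // IsNonbrickDim k s t x} := fun n => (fun x => ⟨next x, hnext x⟩)^[n] ⟨α, h⟩
  refine ⟨fun n => γ n, rfl, fun n x => ?_, fun n => (γ n).2⟩
  rw [← hcoxeter]
  simp only [γ, Function.iterate_succ_apply']

theorem IsNonbrickDim.zero_le_eulerBilin {δ : V → ℤ}
    (hwf : WellFounded fun j i => ∃ a, s a = i ∧ t a = j)
    (hnonneg : ∀ x, 0 ≤ eulerBilin s t x x)
    (hker : LinearMap.ker (eulerBilin s t + (eulerBilin s t).flip) = Submodule.span ℤ {δ})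
    (hδ : 0 < ∑ i, δ i) (h : IsNonbrickDim k s t α) : 0 ≤ eulerBilin s t δ α := by
  obtain ⟨γ, rfl, hγ, hdim⟩ := h.exists_isCoxeterOrbit hwf
  refine hγ.nonneg_apply_zero hnonneg hker (∑ i, LinearMap.proj i) ?_ fun n => ?_
  · simpa [LinearMap.sum_apply] using hδ
  · simpa [LinearMap.sum_apply] using Finset.sum_nonneg fun i _ => (hdim n).nonneg i

end Translation

/-! ### Affine quivers -/

section Acyclic

variable {V A : Type*} {s t : A → V}

theorem wellFounded_of_not_exists_cycle [Finite A]
    (h : ¬∃ (n : ℕ) (g : Fin (n + 1) → A), ∀ k, t (g k) = s (g (k + 1))) :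
    WellFounded fun j i => ∃ a, s a = i ∧ t a = j := by
  refine wellFounded_iff_isEmpty_descending_chain.mpr ⟨fun ⟨f, hf⟩ => h ?_⟩
  choose a hs ht using hf
  obtain ⟨m, n, hmn, ha⟩ : ∃ m n, m < n ∧ a m = a n := by
    obtain ⟨m, n, hne, ha⟩ := Finite.exists_ne_map_eq_of_infinite a
    obtain hmn | hmn := hne.lt_or_gt
    exacts [⟨m, n, hmn, ha⟩, ⟨n, m, hmn, ha.symm⟩]
  obtain ⟨d, rfl⟩ := Nat.exists_eq_add_of_lt hmn
  refine ⟨d, fun k => a (m + k), fun k => ?_⟩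
  dsimp only
  rw [ht]
  obtain rfl | hk := eq_or_ne k (Fin.last d)
  · rw [Fin.last_add_one, Fin.val_zero, add_zero, ha, hs, Fin.val_last]
  · rw [Fin.val_add_one_of_lt (Fin.lt_last_iff_ne_last.mpr hk), hs, add_assoc]

theorem not_exists_cycle_swap
    (h : ¬∃ (n : ℕ) (g : Fin (n + 1) → A), ∀ k, t (g k) = s (g (k + 1))) :
    ¬∃ (n : ℕ) (g : Fin (n + 1) → A), ∀ k, s (g k) = t (g (k + 1)) :=
  fun ⟨n, g, hg⟩ => h ⟨n, fun k => g (-k), fun k => by rw [hg, neg_add_rev, neg_add_cancel_comm]⟩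

end Acyclic

namespace QRep

variable {Q : FinQuiver} {k : Type} [Field k] (X : QRep Q k)

/-- A representation of a finite quiver, regarded as a representation on the direct sum of its
vertex spaces. -/
def total : TotalRep k (∀ i, X.carrier i) Q.src Q.tgt where
  idem j := LinearMap.single k X.carrier j ∘ₗ LinearMap.proj j
  arrow := arrowEnd X
  complete :=
    { idem j := by ext; simp
      ortho i j h := by ext; simp [h]
      complete := by ext; simp }
  idem_mul_arrow a := by ext; simp [arrowEnd]
  arrow_mul_idem a := by ext; simp [arrowEnd]

theorem dim_total : X.total.dim = X.dimVec := by
  ext j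
  have range_idem : LinearMap.range (X.total.idem j) =
      LinearMap.range (LinearMap.single k X.carrier j) :=
    LinearMap.range_comp_of_range_eq_top _
      (LinearMap.range_eq_top.mpr (LinearMap.proj_surjective j))
  rw [TotalRep.dim, dimVec, range_idem, LinearMap.finrank_range_of_inj (Pi.single_injective j)]

variable {X}

theorem piMap_mem_endAlg_total {f : ∀ i, X.carrier i →ₗ[k] X.carrier i} (hf : f ∈ endSubmodule X) :
    LinearMap.piMap f ∈ X.total.endAlg := by
  refine TotalRep.mem_endAlg_iff.mpr ⟨fun j m => funext fun i => ?_, fun a m => funext fun i => ?_⟩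
  · exact (Pi.apply_single (fun i => f i) (fun i => map_zero (f i)) j (m j) i).symm
  · have comm : f (Q.tgt a) (X.map a (m (Q.src a))) = X.map a (f (Q.src a) (m (Q.src a))) :=
      LinearMap.congr_fun (hf a) _
    refine Eq.trans ?_ (Pi.apply_single (fun i => f i) (fun i => map_zero (f i)) (Q.tgt a)
      (X.map a (m (Q.src a))) i).symm
    rw [comm]
    rfl

theorem exists_piMap_eq_of_mem_endAlg_total {φ : Module.End k (∀ i, X.carrier i)}
    (hφ : φ ∈ X.total.endAlg) : ∃ f ∈ endSubmodule X, LinearMap.piMap f = φ := by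
  obtain ⟨idem_comm, arrow_comm⟩ := TotalRep.mem_endAlg_iff.mp hφ
  have single_comm : ∀ i m, φ (Pi.single i (m i)) i = φ m i := fun i m => by
    simpa [total] using (congr_fun (idem_comm i m) i).symm
  refine ⟨fun i => LinearMap.proj i ∘ₗ φ ∘ₗ LinearMap.single k X.carrier i, fun a => ?_, ?_⟩
  · ext x
    simpa [total, arrowEnd] using
      (congr_fun (arrow_comm a (Pi.single (Q.src a) x)) (Q.tgt a)).symm
  · exact LinearMap.ext fun m => funext fun i => single_comm i m

theorem Indecomposable.eq_zero_or_eq_one (hX : X.Indecomposable)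
    {f : ∀ i, Module.End k (X.carrier i)} (hf : f ∈ endSubmodule X) (idem : IsIdempotentElem f) :
    f = 0 ∨ f = 1 := by
  have idem_apply : ∀ i, IsIdempotentElem (f i) := fun i => congr_fun idem i
  have comm : ∀ a x, f (Q.tgt a) (X.map a x) = X.map a (f (Q.src a) x) :=
    fun a => LinearMap.congr_fun (hf a)
  let image : SubRep X :=
    { mod i := LinearMap.range (f i)
      stable a := by rintro _ ⟨x, rfl⟩; exact ⟨X.map a x, comm a x⟩ }
  let kernel : SubRep X :=
    { mod i := LinearMap.ker (f i)
      stable a x hx := by rw [LinearMap.mem_ker] at hx ⊢; rw [comm, hx, map_zero] }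
  obtain h | h := hX.2 image kernel fun i => LinearMap.IsIdempotentElem.isCompl (idem_apply i)
  · exact Or.inl (funext fun i => LinearMap.range_eq_bot.mp (h i))
  · refine Or.inr (funext fun i => LinearMap.ext fun x => LinearMap.ker_eq_bot.mp (h i) ?_)
    exact LinearMap.congr_fun (idem_apply i) x

theorem Indecomposable.isConnectedNonscalar (hX : X.Indecomposable)
    {f : ∀ i, X.carrier i →ₗ[k] X.carrier i} (hf : f ∈ endSubmodule X)
    (hf_scalar : ¬∃ c : k, ∀ i, f i = c • LinearMap.id) :
    IsConnectedNonscalar k X.total.endAlg where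
  eq_zero_or_eq_one := by
    rintro ⟨φ, hφ⟩ idem
    obtain ⟨g, hg, rfl⟩ := exists_piMap_eq_of_mem_endAlg_total hφ
    have idem_g : IsIdempotentElem g := funext fun i => LinearMap.ext fun x => by
      simpa using congr_fun (LinearMap.congr_fun (congr_arg Subtype.val idem) (Pi.single i x)) i
    obtain rfl | rfl := hX.eq_zero_or_eq_one hg idem_g
    exacts [Or.inl rfl, Or.inr rfl]
  not_surjective h := by
    obtain ⟨c, hc⟩ := h ⟨_, piMap_mem_endAlg_total hf⟩
    refine hf_scalar ⟨c, fun i => LinearMap.ext fun x => ?_⟩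
    simpa [Algebra.algebraMap_eq_smul_one] using
      (congr_fun (LinearMap.congr_fun (congr_arg Subtype.val hc) (Pi.single i x)) i).symm

end QRep

theorem FinQuiver.eulerForm_eq_eulerBilin (Q : FinQuiver) (x y : Q.V → ℤ) :
    Q.eulerForm x y = eulerBilin Q.src Q.tgt x y :=
  (eulerBilin_apply _ _ _ _).symm

theorem AffineQuiver.ker_eulerBilin_add_flip (Q : AffineQuiver) :
    LinearMap.ker (eulerBilin Q.src Q.tgt + (eulerBilin Q.src Q.tgt).flip) =
      Submodule.span ℤ {Q.δ} := by
  ext x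
  rw [Submodule.mem_span_singleton, LinearMap.mem_ker]
  refine Iff.trans ?_ ((Q.radical_iff x).trans (exists_congr fun _ => eq_comm))
  simp only [FinQuiver.eulerForm_eq_eulerBilin, LinearMap.ext_iff]
  rfl

theorem AffineQuiver.defect_eq_zero_of_isNonbrickDim (Q : AffineQuiver) {k : Type} [Field k]
    {α : Q.V → ℤ} (h : IsNonbrickDim k Q.src Q.tgt α) : Q.defect α = 0 := by
  have : Nonempty Q.V := Q.connected.nonempty
  have sum_pos : 0 < ∑ i, Q.δ i := Finset.sum_pos (fun i _ => Q.delta_pos i) Finset.univ_nonempty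
  have nonneg : ∀ x, 0 ≤ eulerBilin Q.src Q.tgt x x := fun x => by
    simpa only [FinQuiver.titsForm, FinQuiver.eulerForm_eq_eulerBilin] using Q.posSemidef x
  have δ_mem : Q.δ ∈ LinearMap.ker (eulerBilin Q.src Q.tgt + (eulerBilin Q.src Q.tgt).flip) :=
    Q.ker_eulerBilin_add_flip ▸ Submodule.mem_span_singleton_self Q.δ
  rw [AffineQuiver.defect, FinQuiver.eulerForm_eq_eulerBilin]
  refine le_antisymm ?_ ?_
  · have := h.opposite.zero_le_eulerBilin
      (wellFounded_of_not_exists_cycle (not_exists_cycle_swap Q.acyclic))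
      (by simpa only [← flip_eulerBilin Q.src, LinearMap.BilinForm.flip_apply] using nonneg)
      (by rw [flip_eulerBilin, ← flip_eulerBilin Q.src, add_comm, Q.ker_eulerBilin_add_flip])
      sum_pos
    rw [← flip_eulerBilin, LinearMap.BilinForm.flip_apply] at this
    rw [apply_eq_neg_of_mem_ker_add_flip δ_mem]
    exact neg_nonpos.mpr this
  · exact h.zero_le_eulerBilin (wellFounded_of_not_exists_cycle Q.acyclic) nonneg
      Q.ker_eulerBilin_add_flip sum_pos

theorem nonzero_defect_indecomposable_is_brick_general (Q : AffineQuiver) (k : Type) [Field k]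
    (X : QRep Q.toFinQuiver k) (hX : X.Indecomposable) (hdef : Q.defect X.dimVec ≠ 0) :
    ∀ f ∈ endSubmodule X, ∃ c : k, ∀ i, f i = c • LinearMap.id := by
  intro f hf
  by_contra hf_scalar
  exact hdef (Q.defect_eq_zero_of_isNonbrickDim
    ⟨_, _, _, inferInstance, X.total, hX.isConnectedNonscalar hf hf_scalar, X.dim_total⟩)

/-- Every indecomposable representation of an affine quiver over an algebraically closed
field whose dimension vector has nonzero defect (i.e. every preprojective or preinjective
indecomposable) is a brick: `End(X) = k · id`. -/
theorem nonzero_defect_indecomposable_is_brick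
    (Q : AffineQuiver) (k : Type) [Field k] [IsAlgClosed k]
    (X : QRep Q.toFinQuiver k) (hX : X.Indecomposable)
    (hdef : Q.defect X.dimVec ≠ 0) :
    ∀ f ∈ endSubmodule X, ∃ c : k, ∀ i, f i = c • LinearMap.id :=
  nonzero_defect_indecomposable_is_brick_general Q k X hX hdef
end

section
/- Let Q be an affine quiver with affine Coxeter transformation c, and let α ∈ ℤ^{Q_0} be a root (α ≠ 0 and q(α) ≤ 1). Then α is regular, i.e., there exists an integer N ≥ 1 with c^N·α = α, if and only if the defect vanishes: ∂(α) = e(δ, α) = 0. -/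
open scoped BigOperators

/-!
The Euler form `e` is invariant under `c`, hence so is its symmetrization, which is positive
semidefinite with radical `ℤδ`. A lattice carries only finitely many bilinear forms whose values on
a generating set are bounded by given constants, so by Cauchy–Schwarz some power `c ^ n` acts as the
identity modulo `ℤδ`. Writing `c ^ n x = x + u` and `c ^ n y = y + w` with `u`, `w` in the radical,
invariance gives `e(x, w) + e(u, y) = 0`. If `x` has defect zero, the first term vanishes for all
`y`, and nondegeneracy of `e` forces `u = 0`. Conversely, the sum over a periodic orbit is fixed by
`c`, hence a multiple of `δ`, so it has defect zero, and every member of the orbit has the same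
defect.
-/

section CoxeterTransformation

variable {R M : Type*} [CommRing R] [AddCommGroup M] [Module R M]

/-- The symmetrization `(x, y) ↦ B x y + B y x` of a bilinear form, with no factor `1 / 2` so that
it makes sense over `ℤ`. -/
def symmetrization (B : LinearMap.BilinForm R M) : LinearMap.BilinForm R M :=
  B + LinearMap.flip B

/-- The radical of a bilinear form, understood as the radical of its symmetrization. -/
def symmRadical (B : LinearMap.BilinForm R M) : Submodule R M :=
  LinearMap.ker (symmetrization B)

/-- `c` is a Coxeter transformation of the bilinear form `B`. When `B` is nondegenerate there is at
most one such `c`. -/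
def IsCoxeter (B : LinearMap.BilinForm R M) (c : Module.End R M) : Prop :=
  ∀ x y, B x y = -B y (c x)

variable {B : LinearMap.BilinForm R M} {c : Module.End R M}

theorem symmetrization_apply (x y : M) : symmetrization B x y = B x y + B y x := rfl

theorem mem_symmRadical {x : M} : x ∈ symmRadical B ↔ ∀ y, B x y + B y x = 0 := by
  simp only [symmRadical, LinearMap.mem_ker, LinearMap.ext_iff, symmetrization_apply,
    LinearMap.zero_apply]

theorem isPosSemidef_symmetrization [Preorder R] [AddLeftMono R] (hB : B.IsNonneg) :
    (symmetrization B).IsPosSemidef where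
  eq x y := by simp only [symmetrization_apply, add_comm]
  nonneg x := add_nonneg (hB.nonneg x) (hB.nonneg x)

theorem isOrthogonal_symmetrization {f : M → M} (hf : B.IsOrthogonal f) :
    (symmetrization B).IsOrthogonal f := fun x y => by
  rw [symmetrization_apply, symmetrization_apply, hf, hf]

theorem isOrthogonal_pow {f : Module.End R M} (hf : B.IsOrthogonal f) (n : ℕ) :
    B.IsOrthogonal ⇑(f ^ n) := fun x y => by
  induction n with
  | zero => rfl
  | succ n ih => rw [pow_succ', Module.End.mul_apply, Module.End.mul_apply, hf, ih]

namespace IsCoxeter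

theorem isOrthogonal (hc : IsCoxeter B c) : B.IsOrthogonal c := fun x y => by
  rw [hc x y, hc y (c x), neg_neg]

theorem mem_symmRadical_of_apply_eq (hc : IsCoxeter B c) {x : M} (hx : c x = x) :
    x ∈ symmRadical B :=
  mem_symmRadical.2 fun y => by rw [hc x y, hx, neg_add_cancel]

theorem apply_eq_of_mem_symmRadical (hc : IsCoxeter B c) (hB : B.SeparatingRight) {r : M}
    (hr : r ∈ symmRadical B) : c r = r :=
  sub_eq_zero.1 <| hB _ fun y => by
    rw [map_sub, ← neg_eq_iff_eq_neg.2 (hc r y)]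
    linear_combination -mem_symmRadical.1 hr y

theorem pow_apply_eq_of_mem_symmRadical (hc : IsCoxeter B c) (hB : B.SeparatingRight) {r : M}
    (hr : r ∈ symmRadical B) (n : ℕ) : (c ^ n) r = r := by
  rw [Module.End.pow_apply, Function.iterate_fixed (hc.apply_eq_of_mem_symmRadical hB hr)]

theorem sum_pow_apply_mem_symmRadical (hc : IsCoxeter B c) {n : ℕ} {x : M} (hx : (c ^ n) x = x) :
    (∑ k ∈ Finset.range n, c ^ k) x ∈ symmRadical B := by
  refine hc.mem_symmRadical_of_apply_eq (sub_eq_zero.1 ?_)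
  have telescope := LinearMap.congr_fun (mul_geom_sum c n) x
  simpa [hx] using telescope

theorem apply_sum_pow_apply (hc : IsCoxeter B c) (hB : B.SeparatingRight) {r : M}
    (hr : r ∈ symmRadical B) (n : ℕ) (x : M) :
    B r ((∑ k ∈ Finset.range n, c ^ k) x) = n * B r x := by
  have invariant (k : ℕ) : B r ((c ^ k) x) = B r x := by
    rw [← isOrthogonal_pow hc.isOrthogonal k r x, hc.pow_apply_eq_of_mem_symmRadical hB hr]
  simp [LinearMap.sum_apply, invariant]

theorem pow_apply_eq_self_of_forall_mem_symmRadical (hc : IsCoxeter B c) (hB : B.SeparatingRight)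
    (hrad : ∀ r ∈ symmRadical B, ∀ r' ∈ symmRadical B, B r r' = 0) {n : ℕ}
    (hn : ∀ x, (c ^ n) x - x ∈ symmRadical B) {x : M} (hx : ∀ r ∈ symmRadical B, B r x = 0) :
    (c ^ n) x = x := by
  refine sub_eq_zero.1 (hB _ fun y => ?_)
  set u := (c ^ n) x - x with hu
  set w := (c ^ n) y - y with hw
  have invariant : B (x + u) (y + w) = B x y := by
    rw [hu, hw, add_sub_cancel, add_sub_cancel]
    exact isOrthogonal_pow hc.isOrthogonal n x y
  simp only [map_add, LinearMap.add_apply] at invariant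
  linear_combination mem_symmRadical.1 (hn x) y - invariant + mem_symmRadical.1 (hn y) x
    - hx w (hn y) + hrad u (hn x) w (hn y)

end IsCoxeter

end CoxeterTransformation

section Lattice

variable {M : Type*} [AddCommGroup M]

theorem finite_setOf_bilinForm_abs_apply_le {ι : Type*} [Finite ι] {s : ι → M}
    (hs : Submodule.span ℤ (Set.range s) = ⊤) (C : ι → ι → ℤ) :
    {T : LinearMap.BilinForm ℤ M | ∀ i j, |T (s i) (s j)| ≤ C i j}.Finite := by
  classical
  cases nonempty_fintype ι
  let values (T : LinearMap.BilinForm ℤ M) (i j : ι) : ℤ := T (s i) (s j)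
  have values_injective : Function.Injective values := fun T U h =>
    LinearMap.ext_on_range hs fun i => LinearMap.ext_on_range hs fun j => congr_fun₂ h i j
  refine ((Set.finite_Icc (-C) C).preimage values_injective.injOn).subset fun T hT => ?_
  exact ⟨fun i j => (abs_le.1 (hT i j)).1, fun i j => (abs_le.1 (hT i j)).2⟩

theorem exists_pow_sub_mem_ker_of_isOrthogonal [Module.Finite ℤ M] {S : LinearMap.BilinForm ℤ M}
    (hS : S.IsPosSemidef) {f : Module.End ℤ M} (hf : S.IsOrthogonal f) :
    ∃ n, 1 ≤ n ∧ ∀ x, (f ^ n) x - x ∈ LinearMap.ker S := by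
  obtain ⟨d, s, hs⟩ := Module.Finite.exists_fin (R := ℤ) (M := M)
  have hf_pow (k : ℕ) (x y : M) : S ((f ^ k) x) ((f ^ k) y) = S x y := isOrthogonal_pow hf k x y
  have orbit_mem (k : ℕ) : S ∘ₗ f ^ k ∈ {T : LinearMap.BilinForm ℤ M |
      ∀ i j, |T (s i) (s j)| ≤ S (s i) (s i) * S (s j) (s j)} := fun i j => by
    refine (Int.le_self_sq _).trans ?_
    rw [sq_abs, ← hf_pow k (s i) (s i)]
    exact S.apply_sq_le_of_symm hS.nonneg ⟨hS.eq⟩ _ _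
  obtain ⟨a, b, hab, h⟩ := Set.Finite.exists_lt_map_eq_of_forall_mem orbit_mem
    (finite_setOf_bilinForm_abs_apply_le hs _)
  refine ⟨b - a, by omega, fun x => ?_⟩
  rw [LinearMap.sub_mem_ker_iff]
  ext y
  calc S ((f ^ (b - a)) x) y
      = S ((f ^ a) ((f ^ (b - a)) x)) ((f ^ a) y) := (hf_pow a _ y).symm
    _ = S ((f ^ b) x) ((f ^ a) y) := by
      rw [← Module.End.mul_apply, ← pow_add, Nat.add_sub_cancel' hab.le]
    _ = S ((f ^ a) x) ((f ^ a) y) := (LinearMap.congr_fun₂ h x _).symm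
    _ = S x y := hf_pow a x y

namespace IsCoxeter

variable {B : LinearMap.BilinForm ℤ M} {c : Module.End ℤ M}

theorem exists_pow_sub_mem_symmRadical [Module.Finite ℤ M] (hc : IsCoxeter B c)
    (hnonneg : B.IsNonneg) : ∃ n, 1 ≤ n ∧ ∀ x, (c ^ n) x - x ∈ symmRadical B :=
  exists_pow_sub_mem_ker_of_isOrthogonal (isPosSemidef_symmetrization hnonneg)
    (isOrthogonal_symmetrization hc.isOrthogonal)

theorem exists_pow_apply_eq_self_iff [Module.Finite ℤ M] (hc : IsCoxeter B c)
    (hB : B.SeparatingRight) (hnonneg : B.IsNonneg)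
    (hrad : ∀ r ∈ symmRadical B, ∀ r' ∈ symmRadical B, B r r' = 0) {x : M} :
    (∃ n, 1 ≤ n ∧ (c ^ n) x = x) ↔ ∀ r ∈ symmRadical B, B r x = 0 := by
  constructor
  · rintro ⟨n, hn, hx⟩ r hr
    have orbit_sum := hrad r hr _ (hc.sum_pow_apply_mem_symmRadical hx)
    rw [hc.apply_sum_pow_apply hB hr] at orbit_sum
    exact (mul_eq_zero.1 orbit_sum).resolve_left (Nat.cast_ne_zero.2 (Nat.one_le_iff_ne_zero.1 hn))
  · intro hx
    obtain ⟨n, hn, hmod⟩ := hc.exists_pow_sub_mem_symmRadical hnonneg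
    exact ⟨n, hn, hc.pow_apply_eq_self_of_forall_mem_symmRadical hB hrad hmod hx⟩

end IsCoxeter

end Lattice

theorem exists_mem_periodicPts {α : Type*} [Finite α] [Nonempty α] (f : α → α) :
    ∃ x, x ∈ Function.periodicPts f := by
  obtain ⟨x⟩ := ‹Nonempty α›
  obtain ⟨a, b, hab, h⟩ := Set.finite_univ.exists_lt_map_eq_of_forall_mem
    (f := fun n : ℕ => f^[n] x) fun _ => Set.mem_univ _
  refine ⟨f^[a] x, Function.mk_mem_periodicPts (Nat.sub_pos_of_lt hab) ?_⟩
  rw [Function.IsPeriodicPt, Function.IsFixedPt, ← Function.iterate_add_apply,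
    Nat.sub_add_cancel hab.le]
  exact h.symm

namespace FinQuiver

variable {Q : FinQuiver}

theorem Acyclic.exists_forall_tgt_notMem (hQ : Q.Acyclic) {s : Set Q.V} (hs : s.Nonempty) :
    ∃ i ∈ s, ∀ a, Q.src a = i → Q.tgt a ∉ s := by
  by_contra! h
  choose arrow src_arrow tgt_arrow using h
  let next (i : s) : s := ⟨Q.tgt (arrow i i.2), tgt_arrow i i.2⟩
  have := hs.to_subtype
  obtain ⟨i, hi⟩ := exists_mem_periodicPts next
  obtain ⟨n, hn, hperiod⟩ := Function.mem_periodicPts.1 hi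
  obtain ⟨n, rfl⟩ := Nat.exists_eq_add_one.2 hn
  refine hQ ⟨n, fun k => arrow (next^[k] i) (next^[k] i).2, fun k => ?_⟩
  rw [src_arrow]
  change (next (next^[k] i) : Q.V) = next^[(k + 1 : Fin (n + 1))] i
  rw [← Function.iterate_succ_apply' next, Fin.val_add_one]
  split_ifs with hk
  · rw [hk, Fin.val_last, hperiod, Function.iterate_zero_apply]
  · rfl

theorem eulerForm_single_left (i : Q.V) (y : Q.V → ℤ) :
    Q.eulerForm (Pi.single i 1) y = y i - ∑ a with Q.src a = i, y (Q.tgt a) := by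
  simp [eulerForm, Pi.single_apply, Finset.sum_filter]

variable (Q) in
/-- The Euler form of a quiver, bundled as a bilinear form on the lattice `ℤ^{Q_0}`. -/
def eulerBilinForm : LinearMap.BilinForm ℤ (Q.V → ℤ) :=
  LinearMap.mk₂ ℤ Q.eulerForm
    (fun x y z => by simp only [eulerForm, Pi.add_apply, add_mul, Finset.sum_add_distrib]; ring)
    (fun m x y => by
      simp only [eulerForm, Pi.smul_apply, smul_eq_mul, mul_sub, Finset.mul_sum, mul_assoc])
    (fun x y z => by simp only [eulerForm, Pi.add_apply, mul_add, Finset.sum_add_distrib]; ring)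
    (fun m x y => by
      simp only [eulerForm, Pi.smul_apply, smul_eq_mul, mul_sub, Finset.mul_sum, mul_left_comm])

theorem Acyclic.separatingRight_eulerBilinForm (hQ : Q.Acyclic) :
    Q.eulerBilinForm.SeparatingRight := by
  intro y hy
  by_contra hne
  obtain ⟨i, hi, hsucc⟩ := hQ.exists_forall_tgt_notMem (Function.support_nonempty_iff.2 hne)
  have succ_sum : ∑ a with Q.src a = i, y (Q.tgt a) = 0 :=
    Finset.sum_eq_zero fun a ha =>
      Function.notMem_support.1 (hsucc a (Finset.mem_filter.1 ha).2)
  have hyi : Q.eulerForm (Pi.single i 1) y = 0 := hy _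
  rw [eulerForm_single_left, succ_sum, sub_zero] at hyi
  exact hi hyi

end FinQuiver

namespace AffineQuiver

variable (Q : AffineQuiver)

theorem symmRadical_eulerBilinForm : symmRadical Q.eulerBilinForm = ℤ ∙ Q.δ := by
  ext x
  rw [mem_symmRadical, Submodule.mem_span_singleton]
  exact (Q.radical_iff x).trans (exists_congr fun _ => eq_comm)

theorem forall_mem_symmRadical_apply_eq_zero_iff {x : Q.V → ℤ} :
    (∀ r ∈ symmRadical Q.eulerBilinForm, Q.eulerBilinForm r x = 0) ↔ Q.defect x = 0 := by
  rw [symmRadical_eulerBilinForm]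
  refine ⟨fun h => h _ (Submodule.mem_span_singleton_self _), fun h r hr => ?_⟩
  obtain ⟨m, rfl⟩ := Submodule.mem_span_singleton.1 hr
  rw [LinearMap.map_smul₂, show Q.eulerBilinForm Q.δ x = 0 from h, smul_zero]

theorem defect_eq_zero_of_mem_symmRadical {r : Q.V → ℤ}
    (hr : r ∈ symmRadical Q.eulerBilinForm) : Q.defect r = 0 := by
  rw [symmRadical_eulerBilinForm] at hr
  obtain ⟨m, rfl⟩ := Submodule.mem_span_singleton.1 hr
  have hδ := (Q.radical_iff Q.δ).2 ⟨1, (one_smul ℤ Q.δ).symm⟩ Q.δ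
  have defect_δ : Q.eulerBilinForm Q.δ Q.δ = 0 := by
    change Q.eulerForm Q.δ Q.δ = 0
    omega
  change Q.eulerBilinForm Q.δ (m • Q.δ) = 0
  rw [map_smul, defect_δ, smul_zero]

end AffineQuiver

theorem regular_root_iff_defect_zero_general
    (Q : AffineQuiver) (c : (Q.V → ℤ) ≃ₗ[ℤ] (Q.V → ℤ))
    (hc : ∀ x y : Q.V → ℤ, Q.eulerForm x y = - Q.eulerForm y (c x)) (x : Q.V → ℤ) :
    (∃ N : ℕ, 1 ≤ N ∧ (c ^ N) x = x) ↔ Q.defect x = 0 := by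
  have hcox : IsCoxeter Q.eulerBilinForm c.toLinearMap := hc
  have isotropic : ∀ r ∈ symmRadical Q.eulerBilinForm, ∀ r' ∈ symmRadical Q.eulerBilinForm,
      Q.eulerBilinForm r r' = 0 := fun r hr r' hr' =>
    Q.forall_mem_symmRadical_apply_eq_zero_iff.2 (Q.defect_eq_zero_of_mem_symmRadical hr') r hr
  rw [← Q.forall_mem_symmRadical_apply_eq_zero_iff, ← hcox.exists_pow_apply_eq_self_iff
    Q.acyclic.separatingRight_eulerBilinForm ⟨Q.posSemidef⟩ isotropic]
  simp only [LinearEquiv.pow_apply, Module.End.pow_apply, LinearEquiv.coe_coe]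

/-- A root `x` of an affine quiver is regular (the affine Coxeter transformation `c`
acts periodically on it) if and only if its defect vanishes: `∂(x) = e(δ, x) = 0`. -/
theorem regular_root_iff_defect_zero
    (Q : AffineQuiver) (c : (Q.V → ℤ) ≃ₗ[ℤ] (Q.V → ℤ))
    (hc : ∀ x y : Q.V → ℤ, Q.eulerForm x y = - Q.eulerForm y (c x))
    (x : Q.V → ℤ) (hx0 : x ≠ 0) (hroot : Q.titsForm x ≤ 1) :
    (∃ N : ℕ, 1 ≤ N ∧ (c ^ N) x = x) ↔ Q.defect x = 0 :=
  regular_root_iff_defect_zero_general Q c hc x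
end
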